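/- Let G be a plane graph with no cycle of length divisible by 4, in which no degree-2 vertex lies on a 3-face and which is essentially 3-connected. Then G has at most one 3-face. -/

import Mathlib

/-- The graph obtained from `G` by deleting the vertices of `S`
(the vertices of `S` stay present but become isolated). -/
def deleteVerts {V : Type*} (G : SimpleGraph V) (S : Set V) : SimpleGraph V :=
  SimpleGraph.fromRel fun a b => G.Adj a b ∧ a ∉ S ∧ b ∉ S

/-- `G` is essentially 3-connected: `G` is connected and has no vertex cut `S` with
`|S| ≤ 2` such that `G − S` has two distinct components with at least two vertices
each. -/
def EssentiallyThreeConnected {V : Type*} (G : SimpleGraph V) : Prop :=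
  G.Connected ∧
    ∀ S : Set V, S.ncard ≤ 2 →
      ∀ a a' b b' : V, a ≠ a' → b ≠ b' →
        (deleteVerts G S).Reachable a a' → (deleteVerts G S).Reachable b b' →
        (deleteVerts G S).Reachable a b

/-- A combinatorial plane embedding of `G`, recorded through its list of face
boundaries: every face boundary is a cycle, every edge of `G` lies on exactly two
faces, and Euler's formula `n - e + f = 2` holds. -/
structure PlaneFaces {V : Type*} [Fintype V] [DecidableEq V] (G : SimpleGraph V)
    [DecidableRel G.Adj] where
  /-- the boundary cycles of the faces -/
  faces : List (Σ' v : V, G.Walk v v)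
  isCycle : ∀ f ∈ faces, f.2.IsCycle
  edgeTwice : ∀ e ∈ G.edgeSet,
    (faces.countP fun f => decide (e ∈ f.2.edges)) = 2
  euler : Fintype.card V + faces.length = G.edgeFinset.card + 2



/-- `x, p, y` is a walk with interior list `p`. -/
def PW {V : Type*} (G : SimpleGraph V) (x : V) (p : List V) (y : V) : Prop :=
  List.IsChain G.Adj (x :: (p ++ [y]))

/-- connectivity inside a vertex set -/
def Cn {V : Type*} (G : SimpleGraph V) (U : Set V) : V → V → Prop :=
  Relation.ReflTransGen fun p q => G.Adj p q ∧ p ∈ U ∧ q ∈ U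

section basics
variable {V : Type*} {G : SimpleGraph V}

theorem PW.nil_iff {x y : V} : PW G x [] y ↔ G.Adj x y := by
  simp [PW]

theorem PW.cons_iff {x y z : V} {p : List V} : PW G x (y :: p) z ↔ G.Adj x y ∧ PW G y p z := by
  simp [PW]

theorem PW.split {x y z : V} {p q : List V} :
    PW G x (p ++ y :: q) z ↔ PW G x p y ∧ PW G y q z := by
  induction p generalizing x with
  | nil => simp [PW.cons_iff, PW.nil_iff]
  | cons a p ih => simp [PW.cons_iff, ih, and_assoc]

theorem PW.glue {x y z : V} {p q : List V} (h1 : PW G x p y) (h2 : PW G y q z) :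
    PW G x (p ++ y :: q) z := PW.split.2 ⟨h1, h2⟩

theorem PW.rev {x y : V} {p : List V} (h : PW G x p y) : PW G y p.reverse x := by
  induction p generalizing x with
  | nil => rw [PW.nil_iff] at h; simpa [PW.nil_iff] using h.symm
  | cons a p ih =>
    rw [PW.cons_iff] at h
    rw [List.reverse_cons]
    exact PW.glue (ih h.2) (PW.nil_iff.2 h.1.symm)

theorem PW.exists_walk {x y : V} {p : List V} (h : PW G x p y) :
    ∃ w : G.Walk x y, w.support = x :: (p ++ [y]) := by
  induction p generalizing x with
  | nil =>
    rw [PW.nil_iff] at h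
    exact ⟨h.toWalk, by simp⟩
  | cons a p ih =>
    rw [PW.cons_iff] at h
    obtain ⟨w, hw⟩ := ih h.2
    exact ⟨SimpleGraph.Walk.cons h.1 w, by simp [hw]⟩

/-- no cycle of length divisible by four, in list form -/
def NC (G : SimpleGraph V) : Prop :=
  ∀ x p, PW G x p x → (x :: p).Nodup → 2 ≤ p.length → (p.length + 1) % 4 ≠ 0

theorem NC_of (hno : ¬ ∃ (u : V) (c : G.Walk u u), c.IsCycle ∧ 4 ∣ c.length) : NC G := by
  intro x p hp hnd hl h4
  apply hno
  cases p with
  | nil => simp at hl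
  | cons y p =>
    rw [PW.cons_iff] at hp
    obtain ⟨w, hw⟩ := hp.2.exists_walk
    have hlen : w.length = p.length + 1 := by
      have := w.length_support
      rw [hw] at this
      simp at this
      omega
    refine ⟨x, SimpleGraph.Walk.cons hp.1 w, ?_, ?_⟩
    · rw [SimpleGraph.Walk.cons_isCycle_iff]
      have hpath : w.IsPath := by
        rw [SimpleGraph.Walk.isPath_def, hw]
        simp only [List.nodup_cons, List.mem_cons, List.nodup_append] at hnd ⊢
        grind
      refine ⟨hpath, ?_⟩
      intro he
      cases w with
      | nil => simp at hlen
      | cons h q =>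
        rename_i z
        rw [SimpleGraph.Walk.edges_cons, List.mem_cons] at he
        rw [SimpleGraph.Walk.cons_isPath_iff] at hpath
        rcases he with he | he
        · have hxz : z = x := by
            have := hp.1.ne
            rw [Sym2.eq_iff] at he
            grind
          subst hxz
          have : q.length = 0 := by
            have := hpath.1
            rw [SimpleGraph.Walk.isPath_iff_nil] at this
            exact SimpleGraph.Walk.length_eq_zero_iff.2 this
          simp at hlen hl
          omega
        · exact hpath.2 (SimpleGraph.Walk.snd_mem_support_of_mem_edges _ he)
    · simp only [SimpleGraph.Walk.length_cons, hlen]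
      simp at h4
      omega

theorem Cn.mono {H : SimpleGraph V} {U U' : Set V} (hG : G ≤ H) (hU : U ⊆ U') {x y : V}
    (h : Cn G U x y) : Cn H U' x y := by
  induction h with
  | refl => exact Relation.ReflTransGen.refl
  | tail _ h ih => exact ih.tail ⟨hG h.1, hU h.2.1, hU h.2.2⟩

theorem Cn.trans {U : Set V} {x y z : V} (h : Cn G U x y) (h' : Cn G U y z) : Cn G U x z :=
  Relation.ReflTransGen.trans h h'

theorem Cn.symm {U : Set V} {x y : V} (h : Cn G U x y) : Cn G U y x := by
  induction h with
  | refl => exact Relation.ReflTransGen.refl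
  | tail _ h ih => exact Relation.ReflTransGen.head ⟨h.1.symm, h.2.2, h.2.1⟩ ih

theorem Cn.single {U : Set V} {x y : V} (h : G.Adj x y) (hx : x ∈ U) (hy : y ∈ U) : Cn G U x y :=
  Relation.ReflTransGen.single ⟨h, hx, hy⟩

theorem Cn.mem {U : Set V} {x y : V} (h : Cn G U x y) (hx : x ∈ U) : y ∈ U := by
  induction h with
  | refl => exact hx
  | tail _ h _ => exact h.2.2

theorem Cn.closed {U Q : Set V} {x y : V} (h : Cn G U x y) (hx : x ∈ Q)
    (hQ : ∀ z ∈ Q, ∀ w, G.Adj z w → w ∈ U → w ∈ Q) : y ∈ Q := by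
  induction h with
  | refl => exact hx
  | tail _ h ih => exact hQ _ ih _ h.1 h.2.2

theorem PW.cn {U : Set V} {x y : V} {p : List V} (h : PW G x p y) (hx : x ∈ U) (hy : y ∈ U)
    (hp : ∀ z ∈ p, z ∈ U) : Cn G U x y := by
  induction p generalizing x with
  | nil => exact Cn.single (PW.nil_iff.1 h) hx hy
  | cons a p ih =>
    rw [PW.cons_iff] at h
    exact (Cn.single h.1 hx (hp a (by simp))).trans (ih h.2 (hp a (by simp))
      (fun z hz => hp z (by simp [hz])))

theorem first_split {X : Set V} {l : List V} (h : ∃ z ∈ l, z ∈ X) :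
    ∃ A v B, l = A ++ v :: B ∧ v ∈ X ∧ ∀ z ∈ A, z ∉ X := by
  induction l with
  | nil => simp at h
  | cons a l ih =>
    by_cases ha : a ∈ X
    · exact ⟨[], a, l, rfl, ha, by simp⟩
    · obtain ⟨A, v, B, rfl, hv, hA⟩ := ih (by
        obtain ⟨z, hz, hzX⟩ := h
        rcases List.mem_cons.1 hz with rfl | hz
        · exact absurd hzX ha
        · exact ⟨z, hz, hzX⟩)
      refine ⟨a :: A, v, B, rfl, hv, ?_⟩
      intro z hz
      rcases List.mem_cons.1 hz with rfl | hz
      · exact ha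
      · exact hA z hz

theorem last_split {X : Set V} {l : List V} (h : ∃ z ∈ l, z ∈ X) :
    ∃ A v B, l = A ++ v :: B ∧ v ∈ X ∧ ∀ z ∈ B, z ∉ X := by
  obtain ⟨A, v, B, hl, hv, hA⟩ := first_split (l := l.reverse) (X := X) (by simpa using h)
  refine ⟨B.reverse, v, A.reverse, ?_, hv, by simpa using hA⟩
  have := congrArg List.reverse hl
  simpa using this

theorem first_hit {U X : Set V} {y x : V} (hc : Cn G U y x) (hx : x ∈ X) :
    y ∈ X ∨ (y ∉ X ∧ ∃ w ∈ X, w ∈ U ∧ ∃ p, PW G y p w ∧ (y :: (p ++ [w])).Nodup ∧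
      ∀ z ∈ p, z ∈ U ∧ z ∉ X) := by
  induction hc using Relation.ReflTransGen.head_induction_on with
  | refl => exact Or.inl hx
  | @head y y' h _ ih =>
    by_cases hy : y ∈ X
    · exact Or.inl hy
    right
    refine ⟨hy, ?_⟩
    rcases ih with h1 | ⟨h0, w, hw, hwU, p, hp, hnd, hpU⟩
    · exact ⟨y', h1, h.2.2, [], PW.nil_iff.2 h.1, by simpa using h.1.ne, by simp⟩
    · refine ⟨w, hw, hwU, ?_⟩
      by_cases hyp : y ∈ p
      · obtain ⟨p1, p2, rfl⟩ := List.append_of_mem hyp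
        refine ⟨p2, (PW.split.1 hp).2, ?_, fun z hz => hpU z (by simp [hz])⟩
        simp only [List.nodup_cons, List.mem_cons, List.nodup_append, List.mem_append] at hnd ⊢
        grind
      · refine ⟨y' :: p, PW.cons_iff.2 ⟨h.1, hp⟩, ?_, ?_⟩
        · have : y ≠ w := fun h => hy (h ▸ hw)
          have := h.1.ne
          simp only [List.nodup_cons, List.mem_cons, List.nodup_append, List.mem_append,
            List.cons_append] at hnd ⊢
          grind
        · intro z hz
          rcases List.mem_cons.1 hz with rfl | hz
          · exact ⟨h.2.2, h0⟩
          · exact hpU z hz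

/-- A shortest path from `Y` to `X` inside `U`. -/
theorem yx {U X Y : Set V} {y x : V} (hc : Cn G U y x) (hyU : y ∈ U) (hy : y ∈ Y) (hx : x ∈ X) :
    (∃ v, v ∈ X ∧ v ∈ Y ∧ v ∈ U) ∨
    (∃ v w p, v ∈ Y ∧ w ∈ X ∧ v ∉ X ∧ w ∉ Y ∧ v ∈ U ∧ w ∈ U ∧ PW G v p w ∧
      (v :: (p ++ [w])).Nodup ∧ ∀ z ∈ p, z ∈ U ∧ z ∉ X ∧ z ∉ Y) := by
  rcases first_hit hc hx with h | ⟨h0, w, hw, hwU, p, hp, hnd, hpU⟩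
  · exact Or.inl ⟨y, h, hy, hyU⟩
  by_cases hwY : w ∈ Y
  · exact Or.inl ⟨w, hw, hwY, hwU⟩
  right
  by_cases hpY : ∃ z ∈ p, z ∈ Y
  · obtain ⟨A, v, B, rfl, hv, hB⟩ := last_split hpY
    refine ⟨v, w, B, hv, hw, (hpU v (by simp)).2, hwY, (hpU v (by simp)).1, hwU,
      (PW.split.1 hp).2, ?_, fun z hz =>
        ⟨(hpU z (by simp [hz])).1, (hpU z (by simp [hz])).2, hB z hz⟩⟩
    simp only [List.nodup_cons, List.mem_cons, List.nodup_append, List.mem_append] at hnd ⊢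
    grind
  · push Not at hpY
    exact ⟨y, w, p, hy, hw, h0, hwY, hyU, hwU, hp, hnd,
      fun z hz => ⟨(hpU z hz).1, (hpU z hz).2, hpY z hz⟩⟩

end basics


section menger
variable {V : Type*}

/-- `S` separates `A` from `B`. -/
def VSep (G : SimpleGraph V) (A B S : Set V) : Prop :=
  ∀ a ∈ A, ∀ b ∈ B, a ∉ S → b ∉ S → ¬ Cn G Sᶜ a b

/-- `k` disjoint connections from `A` to `B`. -/
def Lk (G : SimpleGraph V) (A B : Set V) (k : ℕ) : Prop :=
  ∃ f : Fin k → Set V, (∀ i j, i ≠ j → Disjoint (f i) (f j)) ∧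
    ∀ i, ∃ a ∈ A, ∃ b ∈ B, a ∈ f i ∧ Cn G (f i) a b

theorem VSep.symm {G : SimpleGraph V} {A B S : Set V} (h : VSep G A B S) : VSep G B A S :=
  fun a ha b hb h1 h2 h3 => h b hb a ha h2 h1 h3.symm

theorem Lk.symm {G : SimpleGraph V} {A B : Set V} {k : ℕ} (h : Lk G A B k) : Lk G B A k := by
  obtain ⟨f, hf, h⟩ := h
  refine ⟨f, hf, fun i => ?_⟩
  obtain ⟨a, ha, b, hb, hai, hc⟩ := h i
  exact ⟨b, hb, a, ha, hc.mem hai, hc.symm⟩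

theorem Lk.index {G : SimpleGraph V} {A : Set V} {X : Finset V} {k : ℕ}
    (h : Lk G A X k) (hk : X.card = k) :
    ∃ P : V → Set V, (∀ z ∈ X, ∀ z' ∈ X, z ≠ z' → Disjoint (P z) (P z')) ∧
      ∀ z ∈ X, z ∈ P z ∧ (∀ z' ∈ X, z' ∈ P z → z' = z) ∧ ∃ a ∈ A, a ∈ P z ∧ Cn G (P z) a z := by
  classical
  obtain ⟨f, hf, h⟩ := h
  choose a ha g hg hai hc using h
  have hgi : ∀ i, g i ∈ f i := fun i => (hc i).mem (hai i)
  have hinj : Function.Injective g := by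
    intro i j hij
    by_contra hne
    exact Set.disjoint_left.1 (hf i j hne) (hgi i) (hij ▸ hgi j)
  have himg : Finset.univ.image g = X := by
    apply Finset.eq_of_subset_of_card_le
    · intro z hz
      simp only [Finset.mem_image, Finset.mem_univ, true_and] at hz
      obtain ⟨i, rfl⟩ := hz
      exact hg i
    · rw [Finset.card_image_of_injective _ hinj]
      simp [hk]
  have hsurj : ∀ z : V, ∃ s : Set V, z ∈ X → ∃ i, g i = z ∧ s = f i := by
    intro z
    by_cases hz : z ∈ X
    · rw [← himg] at hz
      simp only [Finset.mem_image, Finset.mem_univ, true_and] at hz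
      obtain ⟨i, hi⟩ := hz
      exact ⟨f i, fun _ => ⟨i, hi, rfl⟩⟩
    · exact ⟨∅, fun h => absurd h hz⟩
  choose P hP using hsurj
  have hdis : ∀ z ∈ X, ∀ z' ∈ X, z ≠ z' → Disjoint (P z) (P z') := by
    intro z hz z' hz' hne
    obtain ⟨i, hi, hPi⟩ := hP z hz
    obtain ⟨j, hj, hPj⟩ := hP z' hz'
    rw [hPi, hPj]
    exact hf i j (fun h => hne (by rw [← hi, ← hj, h]))
  have hmem : ∀ z ∈ X, z ∈ P z := by
    intro z hz
    obtain ⟨i, hi, hPi⟩ := hP z hz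
    rw [hPi, ← hi]; exact hgi i
  refine ⟨P, hdis, fun z hz => ⟨hmem z hz, ?_, ?_⟩⟩
  · intro z' hz' hm
    by_contra hne
    exact Set.disjoint_left.1 (hdis z' hz' z hz hne) (hmem z' hz') hm
  · obtain ⟨i, hi, hPi⟩ := hP z hz
    rw [hPi]
    exact ⟨a i, ha i, hai i, hi ▸ hc i⟩

theorem sep_side {G H : SimpleGraph V} {A B S : Set V} {x y : V}
    (hedge : ∀ v w, G.Adj v w → H.Adj v w ∨ (v = x ∧ w = y) ∨ (v = y ∧ w = x))
    (hS : VSep H A B S)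
    (hy : ¬ (y ∉ S ∧ ∃ a ∈ A, a ∉ S ∧ Cn H Sᶜ a y)) {R : Set V}
    (hR : VSep H A (insert x S) R) : VSep G A B R := by
  intro a ha b hb haR hbR hc
  have haS : a ∉ insert x S := fun h => hR a ha a h haR haR Relation.ReflTransGen.refl
  let Q : Set V := {v | v ∉ R ∧ v ∉ insert x S ∧ Cn H Rᶜ a v ∧ Cn H Sᶜ a v}
  have hbQ : b ∈ Q := by
    refine hc.closed (Q := Q) ⟨haR, haS, Relation.ReflTransGen.refl,
      Relation.ReflTransGen.refl⟩ ?_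
    rintro v ⟨hvR, hvX, hv1, hv2⟩ w hvw hwR
    have hH : H.Adj v w := by
      rcases hedge v w hvw with h | ⟨h, _⟩ | ⟨h, _⟩
      · exact h
      · exact absurd (by simp [h]) hvX
      · subst h
        exact absurd ⟨fun h => hvX (by simp [h]), a, ha, fun h => haS (by simp [h]), hv2⟩ hy
    have h1 : Cn H Rᶜ a w := hv1.trans (Cn.single hH hvR hwR)
    have hwX : w ∉ insert x S := fun h => hR a ha w h haR hwR h1
    exact ⟨hwR, hwX, h1, hv2.trans (Cn.single hH (fun h => hvX (by simp [h]))
      (fun h => hwX (by simp [h])))⟩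
  exact hS a ha b hb (fun h => haS (by simp [h])) (fun h => hbQ.2.1 (by simp [h])) hbQ.2.2.2

theorem trim_side {H : SimpleGraph V} {A S : Set V} {x : V} {X : Finset V} {k : ℕ}
    (hX : (X : Set V) = insert x S) (hk : X.card = k) (h : Lk H A X k)
    (hx : x ∉ S ∧ ∃ a ∈ A, a ∉ S ∧ Cn H Sᶜ a x) :
    ∃ P : V → Set V, (∀ z ∈ X, ∀ z' ∈ X, z ≠ z' → Disjoint (P z) (P z')) ∧
      ∀ z ∈ X, (∀ w ∈ P z, w = z ∨ (w ∉ S ∧ ∃ a ∈ A, a ∉ S ∧ Cn H Sᶜ a w)) ∧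
        z ∈ P z ∧ ∃ a ∈ A, a ∈ P z ∧ Cn H (P z) a z := by
  obtain ⟨P, hd, hP⟩ := h.index hk
  let D : Set V := {w | w ∉ S ∧ ∃ a ∈ A, a ∉ S ∧ Cn H Sᶜ a w}
  refine ⟨fun z => P z ∩ (D ∪ {z}), fun z hz z' hz' hne => ?_, fun z hz => ⟨?_, ?_, ?_⟩⟩
  · exact (hd z hz z' hz' hne).mono Set.inter_subset_left Set.inter_subset_left
  · rintro w ⟨_, h | h⟩
    · exact Or.inr h
    · exact Or.inl h
  · exact ⟨(hP z hz).1, Or.inr rfl⟩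
  · obtain ⟨hzP, hun, a, ha, haP, hc⟩ := hP z hz
    have key : ∀ w, Cn H (P z) a w → (w ∈ D ∪ {z} ∧ Cn H (P z ∩ (D ∪ {z})) a w) ∨
        Cn H (P z ∩ (D ∪ {z})) a z := by
      intro w hw
      induction hw with
      | refl =>
        left
        refine ⟨?_, Relation.ReflTransGen.refl⟩
        by_cases haS : a ∈ S
        · right
          exact hun a (by rw [← Finset.mem_coe, hX]; simp [haS]) haP
        · left; exact ⟨haS, a, ha, haS, Relation.ReflTransGen.refl⟩
      | @tail v w _ hvw ih =>
        rcases ih with ⟨hv, hc⟩ | hz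
        · rcases hv with hv | hv
          · have hw : w ∈ D ∪ {z} := by
              by_cases hwS : w ∈ S
              · right
                exact hun w (by rw [← Finset.mem_coe, hX]; simp [hwS]) hvw.2.2
              · left
                obtain ⟨a', ha', haS', hc'⟩ := hv.2
                exact ⟨hwS, a', ha', haS', hc'.trans (Cn.single hvw.1 hv.1 hwS)⟩
            exact Or.inl ⟨hw, hc.trans (Cn.single hvw.1 ⟨hvw.2.1, Or.inl hv⟩ ⟨hvw.2.2, hw⟩)⟩
          · right
            rw [Set.mem_singleton_iff] at hv
            rw [hv] at hc; exact hc
        · exact Or.inr hz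
    have haD : a ∈ D ∪ {z} := by
      by_cases haS : a ∈ S
      · right
        exact hun a (by rw [← Finset.mem_coe, hX]; simp [haS]) haP
      · left; exact ⟨haS, a, ha, haS, Relation.ReflTransGen.refl⟩
    refine ⟨a, ha, ⟨haP, haD⟩, ?_⟩
    rcases key z hc with h | h
    · exact h.2
    · exact h

theorem menger_bot {A B : Set V} [Finite V] {k : ℕ}
    (h : ∀ S : Finset V, VSep (⊥ : SimpleGraph V) A B S → k ≤ S.card) : Lk (⊥ : SimpleGraph V) A B k := by
  classical
  have := Fintype.ofFinite V
  have hk := h (A ∩ B).toFinset (by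
    intro a ha b hb h1 h2 hc
    have : b ∈ ({a} : Set V) := hc.closed rfl (by
      intro z _ w hzw
      simp at hzw)
    rw [Set.mem_singleton_iff] at this
    subst this
    exact h1 (by simp [ha, hb]))
  obtain ⟨T, hT, hTk⟩ := Finset.exists_subset_card_eq hk
  let e := (T.equivFinOfCardEq hTk).symm
  refine ⟨fun i => {(e i : V)}, ?_, ?_⟩
  · intro i j hij
    rw [Set.disjoint_singleton]
    intro h
    exact hij (e.injective (Subtype.ext h))
  · intro i
    have := hT (e i).2
    rw [Set.mem_toFinset] at this
    exact ⟨e i, this.1, e i, this.2, rfl, Relation.ReflTransGen.refl⟩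

theorem menger [Finite V] (G : SimpleGraph V) : ∀ (A B : Set V) (k : ℕ),
    (∀ S : Finset V, VSep G A B S → k ≤ S.card) → Lk G A B k := by
  classical
  induction G using WellFoundedLT.induction with
  | ind G ih =>
  intro A B k hk
  by_cases hbot : G = ⊥
  · subst hbot; exact menger_bot hk
  obtain ⟨x0, y0, hxy0⟩ : ∃ x y, G.Adj x y := by
    by_contra hcon
    push Not at hcon
    apply hbot
    ext a b
    simp [hcon a b]
  set H := G.deleteEdges {s(x0, y0)} with hH
  have hle : H ≤ G := SimpleGraph.deleteEdges_le _
  have hlt : H < G := by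
    refine lt_of_le_of_ne hle ?_
    intro h
    rw [← h] at hxy0
    simp [hH] at hxy0
  have hedge0 : ∀ v w, G.Adj v w → H.Adj v w ∨ (v = x0 ∧ w = y0) ∨ (v = y0 ∧ w = x0) := by
    intro v w hvw
    by_cases h : s(v, w) = s(x0, y0)
    · right; simpa using h
    · left; rw [hH, SimpleGraph.deleteEdges_adj]; exact ⟨hvw, by simpa using h⟩
  by_cases hsep : ∀ S : Finset V, VSep H A B S → k ≤ S.card
  · obtain ⟨f, hf, h⟩ := ih H hlt A B k hsep
    refine ⟨f, hf, fun i => ?_⟩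
    obtain ⟨a, ha, b, hb, h1, h2⟩ := h i
    exact ⟨a, ha, b, hb, h1, h2.mono hle subset_rfl⟩
  push Not at hsep
  obtain ⟨S, hS, hSk⟩ := hsep
  have hnS : ¬ VSep G A B S := fun h => absurd (hk S h) (by omega)
  let DA : Set V := {w | w ∉ S ∧ ∃ a ∈ A, a ∉ S ∧ Cn H (S : Set V)ᶜ a w}
  let DB : Set V := {w | w ∉ S ∧ ∃ a ∈ B, a ∉ S ∧ Cn H (S : Set V)ᶜ a w}
  have hdisj : ∀ w, w ∈ DA → w ∉ DB := by
    rintro w ⟨_, a, ha, haS, hca⟩ ⟨_, b, hb, hbS, hcb⟩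
    exact hS a ha b hb haS hbS (hca.trans hcb.symm)
  have hcross : ∀ (D : Set V), (∃ C : Set V, D = {w | w ∉ S ∧ ∃ a ∈ C, a ∉ S ∧ Cn H (S : Set V)ᶜ a w}) →
      ∀ a b, a ∈ D → b ∉ D → Cn G (S : Set V)ᶜ a b →
      ∃ p q, p ∈ D ∧ q ∉ D ∧ q ∉ S ∧ ((p = x0 ∧ q = y0) ∨ (p = y0 ∧ q = x0)) := by
    rintro D ⟨C, rfl⟩ a b ha hb hc
    by_contra hcon
    push Not at hcon
    apply hb
    refine hc.closed ha ?_
    intro z hz w hzw hw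
    by_contra hwD
    rcases hedge0 z w hzw with h | h | h
    · apply hwD
      obtain ⟨hzS, a', ha', haS', hc'⟩ := hz
      exact ⟨hw, a', ha', haS', hc'.trans (Cn.single h hzS hw)⟩
    · exact (hcon z w hz hwD hw).1 h.1 h.2
    · exact (hcon z w hz hwD hw).2 h.1 h.2
  obtain ⟨a, b, ha, hb, haS, hbS, hab⟩ : ∃ a b, a ∈ A ∧ b ∈ B ∧ a ∉ S ∧ b ∉ S ∧
      Cn G (S : Set V)ᶜ a b := by
    unfold VSep at hnS
    push Not at hnS
    obtain ⟨a, ha, b, hb, h1, h2, h3⟩ := hnS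
    exact ⟨a, b, ha, hb, h1, h2, h3⟩
  have haD : a ∈ DA := ⟨haS, a, ha, haS, Relation.ReflTransGen.refl⟩
  have hbD : b ∈ DB := ⟨hbS, b, hb, hbS, Relation.ReflTransGen.refl⟩
  obtain ⟨x, y, hxA, hyA, hyS, hxy⟩ := hcross DA ⟨A, rfl⟩ a b haD (fun h => hdisj b h hbD) hab
  obtain ⟨y', x', hyB, hxB, hxS, hyx⟩ := hcross DB ⟨B, rfl⟩ b a hbD (hdisj a haD) hab.symm
  have hyy : y' = y ∧ x' = x := by
    have : y' ≠ x := fun h => hdisj x hxA (h ▸ hyB)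
    grind
  obtain ⟨rfl, rfl⟩ := hyy
  have hedge : ∀ v w, G.Adj v w → H.Adj v w ∨ (v = x' ∧ w = y') ∨ (v = y' ∧ w = x') := by
    intro v w hvw
    have := hedge0 v w hvw
    grind
  have hedge' : ∀ v w, G.Adj v w → H.Adj v w ∨ (v = y' ∧ w = x') ∨ (v = x' ∧ w = y') := by
    intro v w hvw
    have := hedge v w hvw
    tauto
  have hsA : ∀ R : Finset V, VSep H A (insert x' S : Finset V) R → k ≤ R.card := by
    intro R hR
    apply hk
    exact sep_side hedge hS hyA (by simpa using hR)
  have hsB : ∀ R : Finset V, VSep H B (insert y' S : Finset V) R → k ≤ R.card := by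
    intro R hR
    apply hk
    exact (sep_side hedge' hS.symm hxB (by simpa using hR)).symm
  have hkA : (insert x' S).card = k := by
    apply le_antisymm
    · have := Finset.card_insert_le x' S; omega
    · apply hsA
      intro a _ b hb _ h2
      exact absurd hb h2
  have hkB : (insert y' S).card = k := by
    apply le_antisymm
    · have := Finset.card_insert_le y' S; omega
    · apply hsB
      intro a _ b hb _ h2
      exact absurd hb h2
  obtain ⟨P, hPd, hP⟩ := trim_side (by simp) hkA (ih H hlt A _ k hsA) hxA
  obtain ⟨Q, hQd, hQ⟩ := trim_side (by simp) hkB (ih H hlt B _ k hsB) hyB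
  let m : V → V := fun z => if z = x' then y' else z
  have hxS' : x' ∉ S := hxA.1
  have hyS' : y' ∉ S := hyB.1
  have hm : ∀ z ∈ insert x' S, m z ∈ insert y' S := by
    intro z hz
    by_cases h : z = x'
    · simp [m, h]
    · simp [m, h]; right; simpa [h] using hz
  have hminj : ∀ z ∈ insert x' S, ∀ z' ∈ insert x' S, z ≠ z' → m z ≠ m z' := by
    intro z hz z' hz' hne
    rw [Finset.mem_insert] at hz hz'
    simp only [m]
    split_ifs <;> grind
  have hcrossd : ∀ z ∈ insert x' S, ∀ z' ∈ insert x' S, z ≠ z' → Disjoint (P z) (Q (m z')) := by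
    intro z hz z' hz' hne
    rw [Set.disjoint_left]
    intro w hw hw'
    have h1 := (hP z hz).1 w hw
    have h2 := (hQ (m z') (hm z' hz')).1 w hw'
    have e1 : z ∈ DA ∨ z ∈ S := by
      rcases Finset.mem_insert.1 hz with h | h
      · left; rw [h]; exact hxA
      · exact Or.inr h
    have e2 : m z' ∈ DB ∨ (m z' ∈ S ∧ m z' = z') := by
      by_cases h : z' = x'
      · left; simp [m, h]; exact hyB
      · right
        have : z' ∈ S := by simpa [h] using hz'
        simpa [m, h] using this
    have f1 : w ∈ DA ∨ (w ∈ S ∧ w = z) := by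
      rcases h1 with h1 | h1
      · subst h1; rcases e1 with h | h
        · exact Or.inl h
        · exact Or.inr ⟨h, rfl⟩
      · exact Or.inl h1
    have f2 : w ∈ DB ∨ (w ∈ S ∧ w = z') := by
      rcases h2 with h2 | h2
      · rcases e2 with h | h
        · left; rw [h2]; exact h
        · right; rw [h2]; exact ⟨h.1, h.2⟩
      · exact Or.inl h2
    rcases f1 with f1 | f1 <;> rcases f2 with f2 | f2
    · exact hdisj w f1 f2
    · exact f1.1 f2.1
    · exact f2.1 f1.1
    · exact hne (f1.2.symm.trans f2.2)
  let e := ((insert x' S).equivFinOfCardEq hkA).symm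
  refine ⟨fun i => P (e i) ∪ Q (m (e i)), ?_, ?_⟩
  · intro i j hij
    have hne : (e i : V) ≠ e j := fun h => hij (e.injective (Subtype.ext h))
    rw [Set.disjoint_union_left, Set.disjoint_union_right, Set.disjoint_union_right]
    exact ⟨⟨hPd _ (e i).2 _ (e j).2 hne, hcrossd _ (e i).2 _ (e j).2 hne⟩,
      (hcrossd _ (e j).2 _ (e i).2 hne.symm).symm,
      hQd _ (hm _ (e i).2) _ (hm _ (e j).2) (hminj _ (e i).2 _ (e j).2 hne)⟩
  · intro i
    obtain ⟨_, hz1, a, ha, ha1, hca⟩ := hP _ (e i).2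
    obtain ⟨_, hz2, b, hb, hb1, hcb⟩ := hQ _ (hm _ (e i).2)
    refine ⟨a, ha, b, hb, Or.inl ha1, ?_⟩
    have h1 : Cn G (P (e i) ∪ Q (m (e i))) a (e i) := hca.mono hle Set.subset_union_left
    have h2 : Cn G (P (e i) ∪ Q (m (e i))) (m (e i)) b := hcb.symm.mono hle Set.subset_union_right
    have h3 : Cn G (P (e i) ∪ Q (m (e i))) (e i) (m (e i)) := by
      by_cases h : (e i : V) = x'
      · refine Cn.single ?_ (Or.inl hz1) (Or.inr hz2)
        simp only [m, h, if_true]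
        rcases hxy with ⟨h1, h2⟩ | ⟨h1, h2⟩
        · rw [h1, h2]; exact hxy0
        · rw [h1, h2]; exact hxy0.symm
      · simp only [m, h, if_false]; exact Relation.ReflTransGen.refl
    exact (h1.trans h3).trans h2

end menger


section cyc
variable {V : Type*} {G : SimpleGraph V}

/-- `T` is the vertex set of a triangle. -/
def Tri (G : SimpleGraph V) (T : Set V) : Prop :=
  ∃ a b c, G.Adj a b ∧ G.Adj b c ∧ G.Adj a c ∧ T = {a, b, c}

theorem Tri.adj {T : Set V} (h : Tri G T) {t t' : V} (ht : t ∈ T) (ht' : t' ∈ T) (hne : t ≠ t') :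
    G.Adj t t' := by
  obtain ⟨a, b, c, h1, h2, h3, rfl⟩ := h
  simp only [Set.mem_insert_iff, Set.mem_singleton_iff] at ht ht'
  have := h1.symm
  have := h2.symm
  have := h3.symm
  grind

theorem Tri.third {T : Set V} (h : Tri G T) {t t' : V} (ht : t ∈ T) (ht' : t' ∈ T) (hne : t ≠ t') :
    ∃ s ∈ T, s ≠ t ∧ s ≠ t' ∧ ∀ r ∈ T, r = t ∨ r = t' ∨ r = s := by
  obtain ⟨a, b, c, h1, h2, h3, rfl⟩ := h
  simp only [Set.mem_insert_iff, Set.mem_singleton_iff] at *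
  have := h1.ne
  have := h2.ne
  have := h3.ne
  rcases ht with rfl | rfl | rfl <;> rcases ht' with rfl | rfl | rfl
  · exact absurd rfl hne
  · exact ⟨c, by simp, by grind, by grind, by grind⟩
  · exact ⟨b, by simp, by grind, by grind, by grind⟩
  · exact ⟨c, by simp, by grind, by grind, by grind⟩
  · exact absurd rfl hne
  · exact ⟨a, by simp, by grind, by grind, by grind⟩
  · exact ⟨b, by simp, by grind, by grind, by grind⟩
  · exact ⟨a, by simp, by grind, by grind, by grind⟩
  · exact absurd rfl hne

theorem Tri.other {T : Set V} (h : Tri G T) {t : V} (ht : t ∈ T) : ∃ s ∈ T, s ≠ t := by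
  obtain ⟨a, b, c, h1, h2, h3, rfl⟩ := h
  have := h1.ne
  by_cases hta : t = a
  · exact ⟨b, by simp, by grind⟩
  · exact ⟨a, by simp, by grind⟩

theorem PC_diff (hN : NC G) {T : Set V} (hT : Tri G T) {t t' : V} {p : List V} (ht : t ∈ T)
    (ht' : t' ∈ T) (hne : t ≠ t') (hp : PW G t p t') (hnd : p.Nodup) (hpT : ∀ z ∈ p, z ∉ T)
    (h0 : p ≠ []) : p.length % 4 = 0 ∨ p.length % 4 = 3 := by
  obtain ⟨s, hs, hst, hst', -⟩ := hT.third ht ht' hne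
  have hl : 1 ≤ p.length := List.length_pos_iff.2 h0
  have h1 := hN t' (t :: p) (PW.cons_iff.2 ⟨hT.adj ht' ht hne.symm, hp⟩)
    (by simp only [List.nodup_cons, List.mem_cons]; grind) (by simp; omega)
  have h2 := hN t' (s :: t :: p) (PW.cons_iff.2 ⟨hT.adj ht' hs hst'.symm,
    PW.cons_iff.2 ⟨hT.adj hs ht hst, hp⟩⟩)
    (by simp only [List.nodup_cons, List.mem_cons]; grind) (by simp)
  simp only [List.length_cons] at h1 h2
  omega

theorem PC_same (hN : NC G) {T : Set V} {t : V} {p : List V} (ht : t ∈ T)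
    (hp : PW G t p t) (hnd : p.Nodup) (hpT : ∀ z ∈ p, z ∉ T)
    (h0 : 2 ≤ p.length) : p.length % 4 ≠ 3 := by
  have := hN t p hp (by simp only [List.nodup_cons]; grind) h0
  omega

theorem PC_two (hN : NC G) {T : Set V} {t t' : V} {p q : List V} (ht : t ∈ T)
    (ht' : t' ∈ T) (hne : t ≠ t') (hp : PW G t p t') (hnd : p.Nodup) (hpT : ∀ z ∈ p, z ∉ T)
    (hq : PW G t q t') (hqnd : q.Nodup) (hqT : ∀ z ∈ q, z ∉ T) (hd : ∀ z ∈ p, z ∉ q)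
    (h0 : p ≠ []) : (p.length + q.length + 2) % 4 ≠ 0 := by
  have hl : 1 ≤ p.length := List.length_pos_iff.2 h0
  have := hN t (p ++ t' :: q.reverse) (hp.glue hq.rev) (by
    simp only [List.nodup_cons, List.nodup_append, List.mem_append, List.mem_cons,
      List.mem_reverse, List.nodup_reverse]
    grind) (by simp; omega)
  simp only [List.length_append, List.length_cons, List.length_reverse] at this
  omega

theorem PC_three (hN : NC G) {T : Set V} {a b c : V} {p q r : List V} (ha : a ∈ T)
    (hb : b ∈ T) (hc : c ∈ T) (hab : a ≠ b) (hbc : b ≠ c) (hac : a ≠ c)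
    (hp : PW G a p b) (hpnd : p.Nodup) (hpT : ∀ z ∈ p, z ∉ T)
    (hq : PW G b q c) (hqnd : q.Nodup) (hqT : ∀ z ∈ q, z ∉ T)
    (hr : PW G c r a) (hrnd : r.Nodup) (hrT : ∀ z ∈ r, z ∉ T)
    (hpq : ∀ z ∈ p, z ∉ q) (hpr : ∀ z ∈ p, z ∉ r) (hqr : ∀ z ∈ q, z ∉ r) :
    (p.length + q.length + r.length + 3) % 4 ≠ 0 := by
  have := hN a (p ++ b :: (q ++ c :: r)) (hp.glue (hq.glue hr)) (by
    simp only [List.nodup_cons, List.nodup_append, List.mem_append, List.mem_cons]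
    grind) (by simp; omega)
  simp only [List.length_append, List.length_cons] at this
  omega

/-- cycles as periodic sequences -/
structure Cyc (G : SimpleGraph V) (f : ℕ → V) (L : ℕ) : Prop where
  three : 3 ≤ L
  per : ∀ k, f (k + L) = f k
  adj : ∀ k, G.Adj (f k) (f (k + 1))
  inj : ∀ i j, f i = f j → i % L = j % L

theorem Cyc.modL {f : ℕ → V} {L : ℕ} (h : Cyc G f L) (k : ℕ) : f (k % L) = f k := by
  conv_rhs => rw [← Nat.mod_add_div k L]
  generalize k / L = m
  generalize k % L = r
  induction m with
  | zero => simp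
  | succ m ih => rw [Nat.mul_succ, ← Nat.add_assoc, h.per]; exact ih

/-- a segment of a sequence -/
def arc (f : ℕ → V) (i n : ℕ) : List V := (List.range' i n).map f

theorem arc_len (f : ℕ → V) (i n : ℕ) : (arc f i n).length = n := by simp [arc]

theorem mem_arc {f : ℕ → V} {i n : ℕ} {z : V} : z ∈ arc f i n ↔ ∃ k, i ≤ k ∧ k < i + n ∧ f k = z := by
  simp [arc, and_assoc]

theorem Cyc.arc_pw {f : ℕ → V} {L : ℕ} (h : Cyc G f L) (i n : ℕ) :
    PW G (f i) (arc f (i + 1) n) (f (i + n + 1)) := by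
  induction n generalizing i with
  | zero => simpa [arc, PW.nil_iff] using h.adj i
  | succ n ih =>
    have : arc f (i + 1) (n + 1) = f (i + 1) :: arc f (i + 1 + 1) n := by
      simp [arc, List.range'_succ]
    rw [this, PW.cons_iff]
    refine ⟨h.adj i, ?_⟩
    have := ih (i + 1)
    rwa [show i + 1 + n + 1 = i + (n + 1) + 1 by omega] at this

theorem Cyc.inj' {f : ℕ → V} {L : ℕ} (h : Cyc G f L) {i j : ℕ} (hij : i < j) (hj : j < i + L) :
    f i ≠ f j := by
  intro he
  have h1 := h.inj i j he
  have h2 : (j - i) % L = 0 := Nat.sub_mod_eq_zero_of_mod_eq h1.symm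
  rw [Nat.mod_eq_of_lt (by omega)] at h2
  omega

theorem Cyc.arc_nodup {f : ℕ → V} {L : ℕ} (h : Cyc G f L) (i n : ℕ) (hn : n ≤ L) :
    (arc f i n).Nodup := by
  unfold arc
  rw [List.nodup_map_iff_inj_on (List.nodup_range')]
  intro x hx y hy hxy
  simp only [List.mem_range'_1] at hx hy
  by_contra hne
  rcases Nat.lt_or_gt_of_ne hne with h1 | h1
  · exact h.inj' h1 (by omega) hxy
  · exact h.inj' h1 (by omega) hxy.symm

theorem Cyc.len_ne (hN : NC G) {f : ℕ → V} {L : ℕ} (h : Cyc G f L) : L % 4 ≠ 0 := by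
  have h3 := h.three
  have h1 := h.arc_pw 0 (L - 1)
  rw [show 0 + (L - 1) + 1 = 0 + L by omega, h.per] at h1
  have h2 := hN _ _ h1 (by
    rw [List.nodup_cons]
    refine ⟨?_, h.arc_nodup _ _ (by omega)⟩
    rw [mem_arc]
    rintro ⟨k, hk1, hk2, hk⟩
    exact h.inj' (i := 0) (j := k) (by omega) (by omega) hk.symm) (by rw [arc_len]; omega)
  rw [arc_len] at h2
  rwa [show L - 1 + 1 = L by omega] at h2

/-- `u` and `v` are joined by a path of length `n` inside `C`. -/
def Arc (G : SimpleGraph V) (C : Set V) (u v : V) (n : ℕ) : Prop :=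
  ∃ r : List V, PW G u r v ∧ r.Nodup ∧ (∀ z ∈ r, z ∈ C ∧ z ≠ u ∧ z ≠ v) ∧ r.length + 1 = n

theorem Arc.symm {C : Set V} {u v : V} {n : ℕ} (h : Arc G C u v n) : Arc G C v u n := by
  obtain ⟨r, h1, h2, h3, h4⟩ := h
  exact ⟨r.reverse, h1.rev, by simpa using h2, fun z hz => by
    have := h3 z (by simpa using hz); tauto, by simpa using h4⟩

theorem Cyc.arc1 {f : ℕ → V} {L : ℕ} (h : Cyc G f L) {i j : ℕ} (hij : i < j) (hj : j < i + L) :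
    Arc G (Set.range f) (f i) (f j) (j - i) := by
  refine ⟨arc f (i + 1) (j - i - 1), ?_, h.arc_nodup _ _ (by omega), ?_, by rw [arc_len]; omega⟩
  · have := h.arc_pw i (j - i - 1)
    rwa [show i + (j - i - 1) + 1 = j by omega] at this
  · intro z hz
    rw [mem_arc] at hz
    obtain ⟨k, h1, h2, rfl⟩ := hz
    exact ⟨⟨k, rfl⟩, (h.inj' (by omega) (by omega)).symm, h.inj' (by omega) (by omega)⟩

theorem Cyc.arc2 {f : ℕ → V} {L : ℕ} (h : Cyc G f L) {i j : ℕ} (hij : i < j) (hj : j < i + L) :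
    Arc G (Set.range f) (f i) (f j) (L - (j - i)) := by
  have := h.arc1 (i := j) (j := i + L) (by omega) (by omega)
  rw [h.per] at this
  rw [show L - (j - i) = i + L - j by omega]
  exact this.symm

/-- positions after a given one -/
theorem Cyc.pos {f : ℕ → V} {L : ℕ} (h : Cyc G f L) (i : ℕ) {v : V} (hv : v ∈ Set.range f)
    (hne : v ≠ f i) : ∃ j, i < j ∧ j < i + L ∧ f j = v := by
  obtain ⟨k, rfl⟩ := hv
  have h3 := h.three
  have h1 : i % L < L := Nat.mod_lt _ (by omega)
  have h2 : k % L < L := Nat.mod_lt _ (by omega)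
  have hd := Nat.mod_add_div i L
  have hne' : k % L ≠ i % L := by
    intro he
    apply hne
    rw [← h.modL k, ← h.modL i, he]
  have key : ∀ j, j % L = k % L → f j = f k := by
    intro j hj
    rw [← h.modL j, hj, h.modL]
  by_cases hlt : i % L < k % L
  · refine ⟨k % L + L * (i / L), by omega, by omega, key _ ?_⟩
    simp
  · refine ⟨k % L + L * (i / L) + L, by omega, by omega, key _ ?_⟩
    simp

theorem Cyc.exists_arcs {f : ℕ → V} {L : ℕ} (h : Cyc G f L) {u v : V} (hu : u ∈ Set.range f)
    (hv : v ∈ Set.range f) (hne : u ≠ v) : ∃ n, 0 < n ∧ n < L ∧ Arc G (Set.range f) u v n ∧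
      Arc G (Set.range f) u v (L - n) := by
  obtain ⟨i, rfl⟩ := hu
  obtain ⟨j, h1, h2, rfl⟩ := h.pos i hv hne.symm
  exact ⟨j - i, by omega, by omega, h.arc1 h1 h2, h.arc2 h1 h2⟩

theorem exists_cyc {x : V} {p : List V} (hp : PW G x p x) (hnd : (x :: p).Nodup)
    (hl : 2 ≤ p.length) : ∃ f, Cyc G f (p.length + 1) ∧ Set.range f = {z | z ∈ x :: p} := by
  have hlt : ∀ k, k % (p.length + 1) < (x :: p).length := by
    intro k; rw [List.length_cons]; exact Nat.mod_lt _ (by omega)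
  refine ⟨fun k => (x :: p)[k % (p.length + 1)]'(hlt k), ⟨by omega, ?_, ?_, ?_⟩, ?_⟩
  · intro k
    simp
  · intro k
    have hch : List.IsChain G.Adj ((x :: p) ++ [x]) := hp
    rw [List.isChain_iff_getElem] at hch
    have hk := hlt k
    rw [List.length_cons] at hk
    have h1 := hch (k % (p.length + 1)) (by simp; omega)
    rw [List.getElem_append_left (hlt k)] at h1
    by_cases hc : k % (p.length + 1) + 1 = p.length + 1
    · have h0 : (k + 1) % (p.length + 1) = 0 := by
        rw [Nat.add_mod]
        have : 1 % (p.length + 1) = 1 := Nat.mod_eq_of_lt (by omega)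
        rw [this, hc, Nat.mod_self]
      simp only [h0]
      rw [List.getElem_append_right (by simp; omega)] at h1
      simpa using h1
    · have h0 : (k + 1) % (p.length + 1) = k % (p.length + 1) + 1 := by
        rw [Nat.add_mod]
        have : 1 % (p.length + 1) = 1 := Nat.mod_eq_of_lt (by omega)
        rw [this, Nat.mod_eq_of_lt (by omega)]
      simp only [h0]
      rw [List.getElem_append_left (by simp; omega)] at h1
      exact h1
  · intro i j hij
    exact (List.Nodup.getElem_inj_iff hnd).1 hij
  · ext z
    simp only [Set.mem_range, Set.mem_ofPred_eq]
    constructor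
    · rintro ⟨k, rfl⟩
      exact List.getElem_mem _
    · intro hz
      obtain ⟨k, hk, rfl⟩ := List.getElem_of_mem hz
      refine ⟨k, ?_⟩
      have : k % (p.length + 1) = k := Nat.mod_eq_of_lt (by simpa using hk)
      simp only [this]

end cyc


section link
variable {V : Type*} {G : SimpleGraph V}

/-- essential 3-connectivity in usable form -/
def Ess (G : SimpleGraph V) : Prop :=
  ∀ S : Set V, S.ncard ≤ 2 → ∀ a a' b b', G.Adj a a' → G.Adj b b' → a ∉ S → a' ∉ S → b ∉ S →
    b' ∉ S → Cn G Sᶜ a b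

theorem ncard_pair_le (x y : V) : ({x, y} : Set V).ncard ≤ 2 := by
  have := Set.ncard_insert_le x ({y} : Set V)
  rw [Set.ncard_singleton] at this
  omega

/-- a path from the triangle to a set `C`, meeting both only in its ends -/
def Lab (G : SimpleGraph V) (T C : Set V) (t : V) (p : List V) (v : V) : Prop :=
  t ∈ T ∧ v ∈ C ∧ PW G t p v ∧ p.Nodup ∧ ∀ z ∈ p, z ∉ T ∧ z ∉ C

theorem lab_diff (hN : NC G) {T C : Set V} (hT : Tri G T) (hCT : ∀ z ∈ C, z ∉ T)
    {t t' u v : V} {p q : List V} (hp : Lab G T C t p u) (hq : Lab G T C t' q v) (hne : t ≠ t')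
    (huv : u ≠ v) (hd : ∀ z ∈ p, z ∉ q) {n : ℕ} (hA : Arc G C u v n) :
    (p.length + q.length + n + 1) % 4 = 0 ∨ (p.length + q.length + n + 1) % 4 = 3 := by
  obtain ⟨r, hr, hrn, hrC, hrl⟩ := hA
  obtain ⟨ht, hu, hpp, hpn, hpT⟩ := hp
  obtain ⟨ht', hv, hqq, hqn, hqT⟩ := hq
  have := PC_diff hN hT ht ht' hne (hpp.glue (hr.glue hqq.rev)) (by
    simp only [List.nodup_cons, List.nodup_append, List.mem_append, List.mem_cons,
      List.mem_reverse, List.nodup_reverse]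
    grind) (by
    simp only [List.mem_append, List.mem_cons, List.mem_reverse]
    grind) (by simp)
  simp only [List.length_append, List.length_cons, List.length_reverse] at this
  rwa [show p.length + q.length + n + 1 = p.length + (r.length + (q.length + 1) + 1) by omega]

theorem lab_same (hN : NC G) {T C : Set V} (hCT : ∀ z ∈ C, z ∉ T)
    {t u v : V} {p q : List V} (hp : Lab G T C t p u) (hq : Lab G T C t q v)
    (huv : u ≠ v) (hd : ∀ z ∈ p, z ∉ q) {n : ℕ} (hA : Arc G C u v n) :
    (p.length + q.length + n + 1) % 4 ≠ 3 := by
  obtain ⟨r, hr, hrn, hrC, hrl⟩ := hA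
  obtain ⟨ht, hu, hpp, hpn, hpT⟩ := hp
  obtain ⟨ht', hv, hqq, hqn, hqT⟩ := hq
  have := PC_same hN ht (hpp.glue (hr.glue hqq.rev)) (by
    simp only [List.nodup_cons, List.nodup_append, List.mem_append, List.mem_cons,
      List.mem_reverse, List.nodup_reverse]
    grind) (by
    simp only [List.mem_append, List.mem_cons, List.mem_reverse]
    grind) (by simp; omega)
  simp only [List.length_append, List.length_cons, List.length_reverse] at this
  rwa [show p.length + q.length + n + 1 = p.length + (r.length + (q.length + 1) + 1) by omega]

theorem tri_robust [Finite V] {T : Set V} (hT : Tri G T)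
    (hTn : ∀ t ∈ T, ∃ n, G.Adj t n ∧ n ∉ T) (S : Set V) (hS : S.ncard ≤ 2) :
    ∃ t n, G.Adj t n ∧ t ∈ T ∧ t ∉ S ∧ n ∉ S := by
  classical
  by_cases h2 : ∃ t ∈ T, ∃ t' ∈ T, t ≠ t' ∧ t ∉ S ∧ t' ∉ S
  · obtain ⟨t, ht, t', ht', hne, h1, h2⟩ := h2
    exact ⟨t, t', hT.adj ht ht' hne, ht, h1, h2⟩
  push Not at h2
  have hcard : T.ncard = 3 := by
    obtain ⟨a, b, c, hab, hbc, hac, hTabc⟩ := hT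
    rw [Set.ncard_eq_three]
    exact ⟨a, b, c, hab.ne, hac.ne, hbc.ne, hTabc⟩
  obtain ⟨t, htT, htS⟩ : ∃ t ∈ T, t ∉ S := by
    by_contra hcon
    push Not at hcon
    have := Set.ncard_le_ncard (s := T) (t := S) hcon
    omega
  obtain ⟨n, hn, hnT⟩ := hTn t htT
  refine ⟨t, n, hn, htT, htS, fun hnS => ?_⟩
  have h3 : insert n (T \ {t}) ⊆ S := by
    intro z hz
    rcases hz with rfl | ⟨h, h'⟩
    · exact hnS
    · exact h2 t htT z h (fun h => h' h.symm) htS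
  have h4 := Set.ncard_le_ncard h3
  rw [Set.ncard_insert_of_notMem (by simp [hnT]), Set.ncard_sdiff_singleton_of_mem htT] at h4
  omega

theorem link [Finite V] (hE : Ess G) {T C : Set V} (hT : Tri G T) (hCT : ∀ z ∈ C, z ∉ T)
    (hTn : ∀ t ∈ T, ∃ n, G.Adj t n ∧ n ∉ T)
    (hC : ∀ S : Set V, S.ncard ≤ 2 → ∃ x y, G.Adj x y ∧ x ∈ C ∧ x ∉ S ∧ y ∉ S) :
    ∃ (P : V → List V) (e : V → V), (∀ t ∈ T, Lab G T C t (P t) (e t)) ∧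
      ∀ t ∈ T, ∀ t' ∈ T, t ≠ t' → e t ≠ e t' ∧ ∀ z ∈ P t, z ∉ P t' := by
  classical
  have hT0 := hT
  obtain ⟨a, b, c, hab, hbc, hac, hTabc⟩ := hT
  have hcard : ({a, b, c} : Finset V).card = 3 := by
    rw [Finset.card_eq_three]
    exact ⟨a, b, c, hab.ne, hac.ne, hbc.ne, rfl⟩
  have hmem : ∀ z, z ∈ ({a, b, c} : Finset V) ↔ z ∈ T := by simp [hTabc]
  have hcoe : (({a, b, c} : Finset V) : Set V) = T := by simp [hTabc]
  have hL : Lk G T C 3 := by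
    apply menger
    intro S hS
    by_contra hlt
    have hS2 : (S : Set V).ncard ≤ 2 := by rw [Set.ncard_coe_finset]; omega
    obtain ⟨x, y, hxy, hxC, hxS, hyS⟩ := hC S hS2
    obtain ⟨t, n, htn, ht, htS, hnS⟩ := tri_robust hT0 hTn S hS2
    exact hS t ht x hxC (by simpa using htS) (by simpa using hxS)
      (hE S hS2 t n x y htn hxy (by simpa using htS) (by simpa using hnS)
        (by simpa using hxS) (by simpa using hyS))
  have hL' := hL.symm
  rw [← hcoe] at hL'
  obtain ⟨P, hPd, hP⟩ := hL'.index hcard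
  have : ∀ t, ∃ (p : List V) (v : V), t ∈ T → Lab G T C t p v ∧ v ∈ P t ∧ ∀ z ∈ p, z ∈ P t := by
    intro t
    by_cases ht : t ∈ T
    · obtain ⟨htP, hun, x, hx, hxP, hc⟩ := hP t ((hmem t).2 ht)
      rcases first_hit hc.symm hx with h | ⟨h0, w, hw, hwU, p, hp, hnd, hpU⟩
      · exact absurd ht (hCT t h)
      · refine ⟨p, w, fun _ => ⟨⟨ht, hw, hp, ?_, ?_⟩, hwU, fun z hz => (hpU z hz).1⟩⟩
        · simp only [List.nodup_cons, List.nodup_append] at hnd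
          exact hnd.2.1
        · intro z hz
          refine ⟨fun hzT => ?_, (hpU z hz).2⟩
          have := hun z ((hmem z).2 hzT) (hpU z hz).1
          subst this
          simp [hz] at hnd
    · exact ⟨[], t, fun h => absurd h ht⟩
  choose p e h using this
  refine ⟨p, e, fun t ht => (h t ht).1, fun t ht t' ht' hne => ?_⟩
  have hd := Set.disjoint_left.1 (hPd t ((hmem t).2 ht) t' ((hmem t').2 ht') hne)
  exact ⟨fun he => hd (h t ht).2.1 (he ▸ (h t' ht').2.1),
    fun z hz hz' => hd ((h t ht).2.2 z hz) ((h t' ht').2.2 z hz')⟩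

theorem pair_parity {s n L : ℕ} (hn : n ≤ L) (h1 : (s + n + 1) % 4 = 0 ∨ (s + n + 1) % 4 = 3)
    (h2 : (s + (L - n) + 1) % 4 = 0 ∨ (s + (L - n) + 1) % 4 = 3) :
    (L % 4 = 3 → s % 2 = 1) ∧ (L % 4 = 2 → n % 2 = 1) := by
  constructor
  · intro h; omega
  · intro h; omega

theorem link_len [Finite V] (hN : NC G) (hE : Ess G) {T : Set V} (hT : Tri G T)
    {f : ℕ → V} {L : ℕ} (hf : Cyc G f L) (hCT : ∀ z ∈ Set.range f, z ∉ T)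
    (hTn : ∀ t ∈ T, ∃ n, G.Adj t n ∧ n ∉ T)
    (hC : ∀ S : Set V, S.ncard ≤ 2 → ∃ x y, G.Adj x y ∧ x ∈ Set.range f ∧ x ∉ S ∧ y ∉ S) :
    L % 4 = 1 := by
  obtain ⟨P, e, hP, hd⟩ := link hE hT hCT hTn hC
  have hL := hf.len_ne hN
  have hT0 := hT
  obtain ⟨a, b, c, hab, hbc, hac, hTabc⟩ := hT
  have ha : a ∈ T := by simp [hTabc]
  have hb : b ∈ T := by simp [hTabc]
  have hc : c ∈ T := by simp [hTabc]
  have key : ∀ t ∈ T, ∀ t' ∈ T, t ≠ t' → ∀ i j, i < j → j < i + L → f i = e t → f j = e t' →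
      (((P t).length + (P t').length + (j - i) + 1) % 4 = 0 ∨
      ((P t).length + (P t').length + (j - i) + 1) % 4 = 3) ∧
      (((P t).length + (P t').length + (L - (j - i)) + 1) % 4 = 0 ∨
      ((P t).length + (P t').length + (L - (j - i)) + 1) % 4 = 3) := by
    intro t ht t' ht' hne i j h1 h2 hi hj
    have hA1 := hf.arc1 h1 h2
    have hA2 := hf.arc2 h1 h2
    rw [hi, hj] at hA1 hA2
    exact ⟨lab_diff hN hT0 hCT (hP t ht) (hP t' ht') hne (hd t ht t' ht' hne).1
      (hd t ht t' ht' hne).2 hA1, lab_diff hN hT0 hCT (hP t ht) (hP t' ht') hne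
      (hd t ht t' ht' hne).1 (hd t ht t' ht' hne).2 hA2⟩
  obtain ⟨i, hi⟩ := (hP a ha).2.1
  obtain ⟨j, hj1, hj2, hj⟩ := hf.pos i (hP b hb).2.1 (by
    rw [hi]; exact (hd a ha b hb hab.ne).1.symm)
  obtain ⟨k, hk1, hk2, hk⟩ := hf.pos i (hP c hc).2.1 (by
    rw [hi]; exact (hd a ha c hc hac.ne).1.symm)
  have hjk : j ≠ k := by
    rintro rfl
    exact (hd b hb c hc hbc.ne).1 (by rw [← hj, ← hk])
  have k1 := key a ha b hb hab.ne i j hj1 hj2 hi hj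
  have k2 := key a ha c hc hac.ne i k hk1 hk2 hi hk
  have p1 := pair_parity (by omega) k1.1 k1.2
  have p2 := pair_parity (by omega) k2.1 k2.2
  rcases Nat.lt_or_gt_of_ne hjk with h | h
  · have k3 := key b hb c hc hbc.ne j k h (by omega) hj hk
    have p3 := pair_parity (by omega) k3.1 k3.2
    clear k1 k2 k3 key
    omega
  · have k3 := key c hc b hb hbc.ne.symm k j h (by omega) hk hj
    have p3 := pair_parity (by omega) k3.1 k3.2
    clear k1 k2 k3 key
    omega

theorem cyc_robust [Finite V] {f : ℕ → V} {L : ℕ} (hf : Cyc G f L) (h5 : 5 ≤ L) (S : Set V)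
    (hS : S.ncard ≤ 2) : ∃ x y, G.Adj x y ∧ x ∈ Set.range f ∧ x ∉ S ∧ y ∉ S := by
  obtain ⟨s, s', hss⟩ : ∃ s s', ∀ z ∈ S, z = s ∨ z = s' := by
    have h0 : S.ncard = 0 ∨ S.ncard = 1 ∨ S.ncard = 2 := by omega
    rcases h0 with h | h | h
    · rw [Set.ncard_eq_zero] at h
      exact ⟨f 0, f 0, by simp [h]⟩
    · obtain ⟨s, rfl⟩ := Set.ncard_eq_one.1 h
      exact ⟨s, s, by simp⟩
    · obtain ⟨s, s', -, rfl⟩ := Set.ncard_eq_two.1 h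
      exact ⟨s, s', by simp⟩
  by_contra hcon
  have hk : ∀ k, f k ∈ S ∨ f (k + 1) ∈ S := by
    intro k
    by_contra h
    push Not at h
    exact hcon ⟨f k, f (k + 1), hf.adj k, ⟨k, rfl⟩, h.1, h.2⟩
  have hk' : ∀ k, (f k = s ∨ f k = s') ∨ (f (k + 1) = s ∨ f (k + 1) = s') := fun k =>
    (hk k).imp (hss _) (hss _)
  have d : ∀ i j, i < j → j < i + 5 → f i ≠ f j := fun i j h h' => hf.inj' h (by omega)
  have h0 := hk' 0
  have h1 := hk' 1
  have h2 := hk' 2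
  have h3 := hk' 3
  have h4 := hk' 4
  simp only [Nat.reduceAdd] at h0 h1 h2 h3 h4
  have d01 := d 0 1 (by omega) (by omega)
  have d02 := d 0 2 (by omega) (by omega)
  have d03 := d 0 3 (by omega) (by omega)
  have d04 := d 0 4 (by omega) (by omega)
  have d12 := d 1 2 (by omega) (by omega)
  have d13 := d 1 3 (by omega) (by omega)
  have d14 := d 1 4 (by omega) (by omega)
  have d15 := d 1 5 (by omega) (by omega)
  have d23 := d 2 3 (by omega) (by omega)
  have d24 := d 2 4 (by omega) (by omega)
  have d25 := d 2 5 (by omega) (by omega)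
  have d34 := d 3 4 (by omega) (by omega)
  have d35 := d 3 5 (by omega) (by omega)
  have d45 := d 4 5 (by omega) (by omega)
  clear d hk hk' hcon
  generalize f 0 = v0 at *
  generalize f 1 = v1 at *
  generalize f 2 = v2 at *
  generalize f 3 = v3 at *
  generalize f 4 = v4 at *
  generalize f 5 = v5 at *
  grind

theorem Tri.cyc {C : Set V} (h : Tri G C) : ∃ f, Cyc G f 3 ∧ Set.range f = C := by
  obtain ⟨a, b, c, hab, hbc, hac, rfl⟩ := h
  obtain ⟨f, hf, hr⟩ := exists_cyc (G := G) (x := a) (p := [b, c])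
    (by simp [PW.cons_iff, PW.nil_iff, hab, hbc, hac.symm])
    (by have := hab.ne; have := hbc.ne; have := hac.ne; simp; tauto) (by simp)
  refine ⟨f, hf, ?_⟩
  rw [hr]; ext z; simp

theorem two_tri [Finite V] (hN : NC G) (hE : Ess G) {T C : Set V} (hT : Tri G T) (hC : Tri G C)
    (hCT : ∀ z ∈ C, z ∉ T) (hTn : ∀ t ∈ T, ∃ n, G.Adj t n ∧ n ∉ T)
    (hCn : ∀ t ∈ C, ∃ n, G.Adj t n ∧ n ∉ C) : False := by
  obtain ⟨f, hf, rfl⟩ := hC.cyc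
  have := link_len hN hE hT hf hCT hTn (fun S hS => by
    obtain ⟨x, y, h1, h2, h3, h4⟩ := tri_robust hC hCn S hS
    exact ⟨x, y, h1, h2, h3, h4⟩)
  omega

end link


section cyclecase
variable {V : Type*} {G : SimpleGraph V}

/-- the situation of the core argument -/
structure Core (G : SimpleGraph V) (T : Set V) : Prop where
  nc : NC G
  ess : Ess G
  tri : Tri G T
  two : ∀ t ∈ T, ∃ n n', n ≠ n' ∧ G.Adj t n ∧ G.Adj t n' ∧ n ∉ T ∧ n' ∉ T
  deg : ∀ v w, G.Adj v w → ∃ w', w' ≠ w ∧ G.Adj v w'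

theorem Core.out {T : Set V} (h : Core G T) : ∀ t ∈ T, ∃ n, G.Adj t n ∧ n ∉ T := by
  intro t ht
  obtain ⟨n, _, _, h1, _, h2, _⟩ := h.two t ht
  exact ⟨n, h1, h2⟩

theorem Core.cyc_mod [Finite V] {T : Set V} (h : Core G T) {f : ℕ → V} {L : ℕ} (hf : Cyc G f L)
    (hfT : ∀ z ∈ Set.range f, z ∉ T) : L = 3 ∨ (5 ≤ L ∧ L % 4 = 1) := by
  have h3 := hf.three
  have h4 := hf.len_ne h.nc
  by_cases h5 : 5 ≤ L
  · exact Or.inr ⟨h5, link_len h.nc h.ess h.tri hf hfT h.out (cyc_robust hf h5)⟩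
  · left; omega

theorem Core.wcyc_odd [Finite V] {T : Set V} (h : Core G T) {x : V} {p : List V}
    (hp : PW G x p x) (hnd : (x :: p).Nodup) (hl : 2 ≤ p.length) (hT : ∀ z ∈ x :: p, z ∉ T) :
    p.length % 2 = 0 := by
  obtain ⟨f, hf, hr⟩ := exists_cyc hp hnd hl
  have := h.cyc_mod hf (by rw [hr]; exact hT)
  omega

/-- a long cycle off the triangle -/
structure CC (G : SimpleGraph V) (T : Set V) (f : ℕ → V) (L : ℕ) : Prop where
  core : Core G T
  cyc : Cyc G f L
  off : ∀ z ∈ Set.range f, z ∉ T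
  five : 5 ≤ L

variable {T : Set V} {f : ℕ → V} {L : ℕ}

theorem CC.mod [Finite V] (h : CC G T f L) : L % 4 = 1 := by
  have := h.core.cyc_mod h.cyc h.off
  have := h.five
  omega

theorem CC.ear0 [Finite V] (h : CC G T f L) {u v : V} {q : List V} {n : ℕ}
    (hu : u ∈ Set.range f) (hv : v ∈ Set.range f) (huv : u ≠ v)
    (hA1 : Arc G (Set.range f) u v n) (hA2 : Arc G (Set.range f) u v (L - n)) (hn : n ≤ L)
    (hq : PW G u q v) (hqn : q.Nodup) (hqT : ∀ z ∈ q, z ∉ T ∧ z ∉ Set.range f)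
    (h1 : 2 ≤ n + q.length) (h2 : 2 ≤ L - n + q.length) : False := by
  have hoff := h.off
  have key : ∀ m, Arc G (Set.range f) u v m → 2 ≤ m + q.length → (m + q.length) % 2 = 0 := by
    rintro m ⟨r, hr, hrn, hrC, hrl⟩ hm
    have := h.core.wcyc_odd (hr.glue hq.rev) (by
      simp only [List.nodup_cons, List.nodup_append, List.mem_append, List.mem_cons,
        List.mem_reverse, List.nodup_reverse]
      grind) (by simp; omega) (by
      simp only [List.mem_append, List.mem_cons, List.mem_reverse]
      grind)
    simp only [List.length_append, List.length_cons, List.length_reverse] at this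
    omega
  have e1 := key n hA1 h1
  have e2 := key _ hA2 h2
  have := h.mod
  omega

theorem CC.ear [Finite V] (h : CC G T f L) {u v : V} {q : List V}
    (hu : u ∈ Set.range f) (hv : v ∈ Set.range f) (huv : u ≠ v)
    (hq : PW G u q v) (hqn : q.Nodup) (hqT : ∀ z ∈ q, z ∉ T ∧ z ∉ Set.range f)
    (h0 : q ≠ []) : False := by
  obtain ⟨n, h1, h2, hA1, hA2⟩ := h.cyc.exists_arcs hu hv huv
  have : 1 ≤ q.length := List.length_pos_iff.2 h0
  exact h.ear0 hu hv huv hA1 hA2 (by omega) hq hqn hqT (by omega) (by omega)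

theorem CC.chord [Finite V] (h : CC G T f L) {i j : ℕ} (h1 : i + 2 ≤ j) (h2 : j + 2 ≤ i + L)
    (ha : G.Adj (f i) (f j)) : False := by
  exact h.ear0 (q := []) ⟨i, rfl⟩ ⟨j, rfl⟩ (h.cyc.inj' (by omega) (by omega))
    (h.cyc.arc1 (by omega) (by omega))
    (h.cyc.arc2 (by omega) (by omega)) (by omega) (PW.nil_iff.2 ha) (by simp) (by simp)
    (by simp; omega) (by simp; omega)

theorem CC.disj [Finite V] (h : CC G T f L) {t t' u v : V} {p q : List V}
    (hp : Lab G T (Set.range f) t p u) (hq : Lab G T (Set.range f) t' q v) (huv : u ≠ v) :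
    ∀ z ∈ p, z ∉ q := by
  intro z hzp hzq
  obtain ⟨ht, hu, hpp, hpn, hpT⟩ := hp
  obtain ⟨ht', hv, hqq, hqn, hqT⟩ := hq
  obtain ⟨A, w, B, hAB, hw, hA⟩ := first_split (l := p.reverse) (X := {z | z ∈ q})
    ⟨z, by simpa using hzp, hzq⟩
  obtain ⟨q1, q2, rfl⟩ := List.append_of_mem (show w ∈ q from hw)
  have hr := hpp.rev
  have hpn' : p.reverse.Nodup := by simpa using hpn
  have hpT' : ∀ z ∈ p.reverse, z ∉ T ∧ z ∉ Set.range f := by simpa using hpT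
  rw [hAB] at hr hpn' hpT'
  have g1 := (PW.split.1 hr).1
  have g2 := (PW.split.1 hqq).2
  have hA' : ∀ z ∈ A, z ∉ q1 ++ w :: q2 := hA
  refine h.ear hu hv huv (g1.glue g2) ?_ ?_ (by simp)
  · simp only [List.nodup_cons, List.nodup_append, List.mem_append, List.mem_cons] at *
    grind
  · simp only [List.mem_append, List.mem_cons] at *
    grind

theorem arith_diff {s n L : ℕ} (hn : n ≤ L) (hL : L % 4 = 1)
    (h1 : (s + n + 1) % 4 = 0 ∨ (s + n + 1) % 4 = 3)
    (h2 : (s + (L - n) + 1) % 4 = 0 ∨ (s + (L - n) + 1) % 4 = 3) :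
    (s % 4 = 0 ∧ (n % 4 = 2 ∨ n % 4 = 3)) ∨ (s % 4 = 2 ∧ (n % 4 = 0 ∨ n % 4 = 1)) := by
  omega

theorem arith_same {s n L : ℕ} (hn : n ≤ L) (hL : L % 4 = 1) (hs : s % 2 = 0)
    (h1 : (s + n + 1) % 4 ≠ 3) (h2 : (s + (L - n) + 1) % 4 ≠ 3) :
    (s % 4 = 0 ∧ (n % 4 = 0 ∨ n % 4 = 1)) ∨ (s % 4 = 2 ∧ (n % 4 = 2 ∨ n % 4 = 3)) := by
  omega

theorem CC.diff [Finite V] (h : CC G T f L) {t t' u v : V} {p q : List V}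
    (hp : Lab G T (Set.range f) t p u) (hq : Lab G T (Set.range f) t' q v) (huv : u ≠ v)
    (hne : t ≠ t') {n : ℕ} (hn : n ≤ L) (hA1 : Arc G (Set.range f) u v n)
    (hA2 : Arc G (Set.range f) u v (L - n)) :
    ((p.length + q.length) % 4 = 0 ∧ (n % 4 = 2 ∨ n % 4 = 3)) ∨
      ((p.length + q.length) % 4 = 2 ∧ (n % 4 = 0 ∨ n % 4 = 1)) :=
  arith_diff hn h.mod (lab_diff h.core.nc h.core.tri h.off hp hq hne huv (h.disj hp hq huv) hA1)
    (lab_diff h.core.nc h.core.tri h.off hp hq hne huv (h.disj hp hq huv) hA2)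

theorem CC.same [Finite V] (h : CC G T f L) {t u v : V} {p q : List V}
    (hp : Lab G T (Set.range f) t p u) (hq : Lab G T (Set.range f) t q v) (huv : u ≠ v)
    (hs : (p.length + q.length) % 2 = 0) {n : ℕ} (hn : n ≤ L) (hA1 : Arc G (Set.range f) u v n)
    (hA2 : Arc G (Set.range f) u v (L - n)) :
    ((p.length + q.length) % 4 = 0 ∧ (n % 4 = 0 ∨ n % 4 = 1)) ∨
      ((p.length + q.length) % 4 = 2 ∧ (n % 4 = 2 ∨ n % 4 = 3)) :=
  arith_same hn h.mod hs (lab_same h.core.nc h.off hp hq huv (h.disj hp hq huv) hA1)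
    (lab_same h.core.nc h.off hp hq huv (h.disj hp hq huv) hA2)

theorem CC.triple [Finite V] (h : CC G T f L) :
    ∃ (P : V → List V) (e : V → V), (∀ t ∈ T, Lab G T (Set.range f) t (P t) (e t)) ∧
      ∀ t ∈ T, ∀ t' ∈ T, t ≠ t' → e t ≠ e t' := by
  obtain ⟨P, e, h1, h2⟩ := link h.core.ess h.core.tri h.off h.core.out (cyc_robust h.cyc h.five)
  exact ⟨P, e, h1, fun t ht t' ht' hne => (h2 t ht t' ht' hne).1⟩

theorem CC.uniq0 [Finite V] (h : CC G T f L) {t t' s v w w' : V} {p p' q r : List V}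
    (hp : Lab G T (Set.range f) t p v) (hp' : Lab G T (Set.range f) t' p' v) (hne : t ≠ t')
    (hq : Lab G T (Set.range f) t' q w) (hw : v ≠ w)
    (hr : Lab G T (Set.range f) s r w') (hw' : v ≠ w') (hs : s ≠ t) (hs' : s ≠ t') : False := by
  obtain ⟨n, h1, h2, hA1, hA2⟩ := h.cyc.exists_arcs hp.2.1 hq.2.1 hw
  obtain ⟨m, h3, h4, hB1, hB2⟩ := h.cyc.exists_arcs hp.2.1 hr.2.1 hw'
  have e1 := h.diff hp hq hw hne h2.le hA1 hA2
  have e3 := h.diff hp hr hw' hs.symm h4.le hB1 hB2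
  have e4 := h.diff hp' hr hw' hs'.symm h4.le hB1 hB2
  have e2 := h.same hp' hq hw (by omega) h2.le hA1 hA2
  omega

theorem CC.uniq [Finite V] (h : CC G T f L) {t t' v : V} {p p' : List V}
    (hp : Lab G T (Set.range f) t p v) (hp' : Lab G T (Set.range f) t' p' v) : t = t' := by
  by_contra hne
  obtain ⟨s, hs, hst, hst', -⟩ := h.core.tri.third hp.1 hp'.1 hne
  obtain ⟨P, e, hP, hd⟩ := h.triple
  have ht := hp.1
  have ht' := hp'.1
  by_cases hv : v = e s
  · have l1 : v ≠ e t := by rw [hv]; exact hd s hs t ht hst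
    have l2 : v ≠ e t' := by rw [hv]; exact hd s hs t' ht' hst'
    have hps := hP s hs
    rw [← hv] at hps
    exact h.uniq0 hps hp hst (hP t ht) l1 (hP t' ht') l2 hst'.symm (Ne.symm hne)
  · by_cases hv2 : v = e t'
    · have l1 : v ≠ e t := by rw [hv2]; exact hd t' ht' t ht (Ne.symm hne)
      exact h.uniq0 hp' hp (Ne.symm hne) (hP t ht) l1 (hP s hs) hv hst' hst
    · exact h.uniq0 hp hp' hne (hP t' ht') hv2 (hP s hs) hv hst hst'

theorem CC.parity [Finite V] (h : CC G T f L) : ∃ ε, ∀ t p v, Lab G T (Set.range f) t p v →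
    p.length % 2 = ε := by
  obtain ⟨P, e, hP, hd⟩ := h.triple
  have hev : ∀ t t' u v p q, Lab G T (Set.range f) t p u → Lab G T (Set.range f) t' q v → u ≠ v →
      t ≠ t' → p.length % 2 = q.length % 2 := by
    intro t t' u v p q hp hq huv hne
    obtain ⟨n, h1, h2, hA1, hA2⟩ := h.cyc.exists_arcs hp.2.1 hq.2.1 huv
    have := h.diff hp hq huv hne h2.le hA1 hA2
    omega
  obtain ⟨a, b, c, hab, hbc, hac, hT⟩ := id h.core.tri
  have ha : a ∈ T := by simp [hT]
  refine ⟨(P a).length % 2, ?_⟩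
  have htr : ∀ t ∈ T, (P t).length % 2 = (P a).length % 2 := by
    intro t ht
    by_cases hta : t = a
    · rw [hta]
    · exact hev _ _ _ _ _ _ (hP t ht) (hP a ha) (hd t ht a ha hta) hta
  intro t p v hp
  obtain ⟨s, hs, hst⟩ := h.core.tri.other hp.1
  obtain ⟨s', hs', h1, h2, -⟩ := h.core.tri.third hp.1 hs hst.symm
  by_cases hv : v = e s
  · have hv' : v ≠ e s' := by rw [hv]; exact hd s hs s' hs' h2.symm
    rw [hev _ _ _ _ _ _ hp (hP s' hs') hv' h1.symm, htr s' hs']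
  · rw [hev _ _ _ _ _ _ hp (hP s hs) hv hst.symm, htr s hs]

theorem CC.short [Finite V] (h : CC G T f L) {t v : V} {p : List V}
    (hp : Lab G T (Set.range f) t p v) : p.length ≤ 1 := by
  by_contra hlen
  have hp0 := hp
  obtain ⟨ht, ⟨i, rfl⟩, hpp, hpn, hpT⟩ := hp
  obtain ⟨y1, y2, p', rfl⟩ : ∃ y1 y2 p', p = y1 :: y2 :: p' := by
    match p, hlen with
    | y1 :: y2 :: p', _ => exact ⟨y1, y2, p', rfl⟩
    | [], h => simp at h
    | [_], h => simp at h
  have h5 := h.five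
  have hoff : ∀ k, f k ∉ T := fun k => h.off _ ⟨k, rfl⟩
  have hy : G.Adj y1 y2 := by
    rw [PW.cons_iff, PW.cons_iff] at hpp
    exact hpp.2.1
  have hy1 := hpT y1 (by simp)
  have hy2 := hpT y2 (by simp)
  have hnS : ∀ z, z ∉ T ∧ z ∉ Set.range f → z ∉ ({f i, t} : Set V) := by
    rintro z ⟨h1, h2⟩ h3
    simp only [Set.mem_insert_iff, Set.mem_singleton_iff] at h3
    rcases h3 with rfl | rfl
    · exact h2 ⟨i, rfl⟩
    · exact h1 ht
  have hC : ∀ k, 0 < k → k < 5 → f (i + k) ∉ ({f i, t} : Set V) := by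
    intro k h1 h2 h3
    simp only [Set.mem_insert_iff, Set.mem_singleton_iff] at h3
    rcases h3 with h3 | h3
    · exact h.cyc.inj' (i := i) (j := i + k) (by omega) (by omega) h3.symm
    · exact hoff _ (h3 ▸ ht)
  have hc := h.core.ess {f i, t} (ncard_pair_le _ _) y1 y2 (f (i + 1)) (f (i + 2)) hy
    (h.cyc.adj _) (hnS y1 hy1) (hnS y2 hy2) (hC 1 (by omega) (by omega)) (hC 2 (by omega) (by omega))
  rcases yx (X := {z | (z ∈ Set.range f ∧ z ≠ f i) ∨ (z ∈ T ∧ z ≠ t)})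
    (Y := {z | z ∈ y1 :: y2 :: p'}) hc (hnS y1 hy1) (by simp)
    (Or.inl ⟨⟨i + 1, rfl⟩, (h.cyc.inj' (by omega) (by omega)).symm⟩) with
    ⟨z, hz1, hz2, -⟩ | ⟨y, w, r, hyY, hwX, hyX, hwY, hyU, hwU, hr, hrn, hrU⟩
  · have := hpT z hz2
    rcases hz1 with h1 | h1
    · exact this.2 h1.1
    · exact this.1 h1.1
  · have hrT : ∀ z ∈ r, z ∉ T ∧ z ∉ Set.range f := by
      intro z hz
      obtain ⟨h1, h2, h3⟩ := hrU z hz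
      simp only [Set.mem_compl_iff, Set.mem_insert_iff, Set.mem_singleton_iff, not_or] at h1
      have h2' : ¬ ((z ∈ Set.range f ∧ z ≠ f i) ∨ (z ∈ T ∧ z ≠ t)) := h2
      tauto
    obtain ⟨p1, p2, hpe⟩ := List.append_of_mem (show y ∈ y1 :: y2 :: p' from hyY)
    rw [hpe] at hpp hpn hpT
    have hrY : ∀ z ∈ r, z ∉ p1 ++ y :: p2 := by
      intro z hz
      rw [← hpe]
      exact (hrU z hz).2.2
    have g := (PW.split.1 hpp).2
    have hnd1 : (r.reverse ++ y :: p2).Nodup := by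
      simp only [List.nodup_cons, List.nodup_append, List.mem_append, List.mem_cons,
        List.mem_reverse, List.nodup_reverse] at *
      grind
    have hT1 : ∀ z ∈ r.reverse ++ y :: p2, z ∉ T ∧ z ∉ Set.range f := by
      simp only [List.mem_append, List.mem_cons, List.mem_reverse] at *
      grind
    have hpw : PW G w (r.reverse ++ y :: p2) (f i) := hr.rev.glue g
    rcases hwX with ⟨hw1, hw2⟩ | ⟨hw1, hw2⟩
    · exact h.ear hw1 ⟨i, rfl⟩ hw2 hpw hnd1 hT1 (by simp)
    · exact hw2 (h.uniq ⟨hw1, ⟨i, rfl⟩, hpw, hnd1, hT1⟩ hp0)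

end cyclecase


section cyclecase2
variable {V : Type*} {G : SimpleGraph V} {T : Set V} {f : ℕ → V} {L : ℕ}

theorem CC.dense [Finite V] (h : CC G T f L) (i : ℕ) :
    (∃ t p, Lab G T (Set.range f) t p (f (i + 1))) ∨
    (∃ t p, Lab G T (Set.range f) t p (f (i + 2))) := by
  have h5 := h.five
  have hoff : ∀ k, f k ∉ T := fun k => h.off _ ⟨k, rfl⟩
  have hinj : ∀ j k, j < k → k < j + 5 → f j ≠ f k := fun j k h1 h2 => h.cyc.inj' h1 (by omega)
  obtain ⟨a, b, c, hab, hbc, hac, hT⟩ := id h.core.tri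
  have ha : a ∈ T := by simp [hT]
  have hb : b ∈ T := by simp [hT]
  have hTS : ∀ t ∈ T, t ∉ ({f i, f (i + 3)} : Set V) := by
    intro t ht h3
    simp only [Set.mem_insert_iff, Set.mem_singleton_iff] at h3
    rcases h3 with rfl | rfl
    · exact hoff _ ht
    · exact hoff _ ht
  have h1S : f (i + 1) ∉ ({f i, f (i + 3)} : Set V) := by
    have := hinj i (i + 1) (by omega) (by omega)
    have := hinj (i + 1) (i + 3) (by omega) (by omega)
    simp only [Set.mem_insert_iff, Set.mem_singleton_iff]; tauto
  have h2S : f (i + 2) ∉ ({f i, f (i + 3)} : Set V) := by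
    have := hinj i (i + 2) (by omega) (by omega)
    have := hinj (i + 2) (i + 3) (by omega) (by omega)
    simp only [Set.mem_insert_iff, Set.mem_singleton_iff]; tauto
  have hc := h.core.ess {f i, f (i + 3)} (ncard_pair_le _ _) (f (i + 1)) (f (i + 2)) a b
    (h.cyc.adj _) hab h1S h2S (hTS a ha) (hTS b hb)
  rcases yx (X := {z | z ∈ T ∨ (z ∈ Set.range f ∧ z ≠ f (i + 1) ∧ z ≠ f (i + 2) ∧
      z ∉ ({f i, f (i + 3)} : Set V))})
    (Y := {f (i + 1), f (i + 2)}) hc h1S (by simp) (Or.inl ha) with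
    ⟨z, hz1, hz2, -⟩ | ⟨y, w, r, hyY, hwX, hyX, hwY, hyU, hwU, hr, hrn, hrU⟩
  · exfalso
    simp only [Set.mem_insert_iff, Set.mem_singleton_iff] at hz2
    rcases hz1 with h1 | h1
    · rcases hz2 with rfl | rfl
      · exact hoff _ h1
      · exact hoff _ h1
    · tauto
  · have hrT : ∀ z ∈ r, z ∉ T ∧ z ∉ Set.range f := by
      intro z hz
      obtain ⟨h1, h2, h3⟩ := hrU z hz
      simp only [Set.mem_insert_iff, Set.mem_singleton_iff, not_or] at h3
      have h1' : z ∉ ({f i, f (i + 3)} : Set V) := h1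
      have h2' : ¬ (z ∈ T ∨ (z ∈ Set.range f ∧ z ≠ f (i + 1) ∧ z ≠ f (i + 2) ∧
        z ∉ ({f i, f (i + 3)} : Set V))) := h2
      tauto
    have hyC : y ∈ Set.range f := by
      rcases hyY with rfl | rfl
      · exact ⟨_, rfl⟩
      · exact ⟨_, rfl⟩
    have hrnd : r.Nodup := by
      simp only [List.nodup_cons, List.nodup_append] at hrn
      exact hrn.2.1
    have hyw : y ≠ w := by
      rintro rfl; simp at hrn
    rcases hwX with hw | ⟨hw1, hw2, hw3, hw4⟩
    · have hl : Lab G T (Set.range f) w r.reverse y :=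
        ⟨hw, hyC, hr.rev, by simpa using hrnd, by simpa using hrT⟩
      rcases hyY with rfl | rfl
      · exact Or.inl ⟨_, _, hl⟩
      · exact Or.inr ⟨_, _, hl⟩
    · exfalso
      by_cases hr0 : r = []
      · subst hr0
        rw [PW.nil_iff] at hr
        simp only [Set.mem_insert_iff, Set.mem_singleton_iff, not_or] at hw4
        obtain ⟨j, hj1, hj2, rfl⟩ := h.cyc.pos i hw1 hw4.1
        have n1 : j ≠ i + 1 := by rintro rfl; exact hw2 rfl
        have n2 : j ≠ i + 2 := by rintro rfl; exact hw3 rfl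
        have n3 : j ≠ i + 3 := by rintro rfl; exact hw4.2 rfl
        rcases hyY with rfl | rfl
        · exact h.chord (by omega) (by omega) hr
        · exact h.chord (by omega) (by omega) hr
      · exact h.ear hyC hw1 hyw hr hrnd hrT hr0

theorem CC.false [Finite V] (h : CC G T f L) : False := by
  obtain ⟨ε, hε⟩ := h.parity
  have hlen : ∀ t p v, Lab G T (Set.range f) t p v → p.length = ε := by
    intro t p v hp
    have := hε t p v hp
    have := h.short hp
    omega
  have h5 := h.five
  have hdiff : ∀ i j t t' p q, i < j → j < i + L → Lab G T (Set.range f) t p (f i) →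
      Lab G T (Set.range f) t' q (f j) → t ≠ t' →
      ((ε + ε) % 4 = 0 ∧ ((j - i) % 4 = 2 ∨ (j - i) % 4 = 3)) ∨
      ((ε + ε) % 4 = 2 ∧ ((j - i) % 4 = 0 ∨ (j - i) % 4 = 1)) := by
    intro i j t t' p q h1 h2 hp hq hne
    have := h.diff hp hq (h.cyc.inj' h1 h2) hne (by omega) (h.cyc.arc1 h1 h2) (h.cyc.arc2 h1 h2)
    rwa [hlen _ _ _ hp, hlen _ _ _ hq] at this
  have hsame : ∀ i j t p q, i < j → j < i + L → Lab G T (Set.range f) t p (f i) →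
      Lab G T (Set.range f) t q (f j) →
      ((ε + ε) % 4 = 0 ∧ ((j - i) % 4 = 0 ∨ (j - i) % 4 = 1)) ∨
      ((ε + ε) % 4 = 2 ∧ ((j - i) % 4 = 2 ∨ (j - i) % 4 = 3)) := by
    intro i j t p q h1 h2 hp hq
    have := h.same hp hq (h.cyc.inj' h1 h2) (by rw [hlen _ _ _ hp, hlen _ _ _ hq]; omega)
      (by omega) (h.cyc.arc1 h1 h2) (h.cyc.arc2 h1 h2)
    rwa [hlen _ _ _ hp, hlen _ _ _ hq] at this
  obtain ⟨P, e, hP, hd⟩ := h.triple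
  obtain ⟨a, b, c, hab, hbc, hac, hT⟩ := id h.core.tri
  have ha : a ∈ T := by simp [hT]
  have hb : b ∈ T := by simp [hT]
  have hcT : c ∈ T := by simp [hT]
  by_cases hε0 : (ε + ε) % 4 = 0
  · have hS : ∀ i j t t' p q, i < j → j < i + L → Lab G T (Set.range f) t p (f i) →
        Lab G T (Set.range f) t' q (f j) → ((j - i) % 4 = 0 ∨ (j - i) % 4 = 1) → t = t' := by
      intro i j t t' p q h1 h2 hp hq hij
      by_contra hne
      have := hdiff i j t t' p q h1 h2 hp hq hne
      omega
    have main : ∀ i j k ti tj tk pi pj pk, i < j → j < k → k < i + L →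
        Lab G T (Set.range f) ti pi (f i) → Lab G T (Set.range f) tj pj (f j) →
        Lab G T (Set.range f) tk pk (f k) → ti ≠ tj → tj ≠ tk → ti ≠ tk → False := by
      intro i j k ti tj tk pi pj pk h1 h2 h3 hi hj hk n1 n2 n3
      have d1 := hdiff i j _ _ _ _ h1 (by omega) hi hj n1
      have d2 := hdiff j k _ _ _ _ h2 (by omega) hj hk n2
      have d3 := hdiff i k _ _ _ _ (by omega) h3 hi hk n3
      have e1 : (j - i) % 4 = 3 := by omega
      have e2 : (k - j) % 4 = 3 := by omega
      rcases h.dense i with ⟨t, p, ht⟩ | ⟨t, p, ht⟩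
      · have s1 := hS i (i + 1) _ _ _ _ (by omega) (by omega) hi ht (by omega)
        have s2 := hS (i + 1) k _ _ _ _ (by omega) (by omega) ht hk (by omega)
        exact n3 (s1.trans s2)
      · have s1 := hS (i + 2) j _ _ _ _ (by omega) (by omega) ht hj (by omega)
        have s2 := hS (i + 2) k _ _ _ _ (by omega) (by omega) ht hk (by omega)
        exact n2 (s1.symm.trans s2)
    obtain ⟨i, hi⟩ := (hP a ha).2.1
    obtain ⟨j, hj1, hj2, hj⟩ := h.cyc.pos i (hP b hb).2.1 (by
      rw [hi]; exact (hd a ha b hb hab.ne).symm)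
    obtain ⟨k, hk1, hk2, hk⟩ := h.cyc.pos i (hP c hcT).2.1 (by
      rw [hi]; exact (hd a ha c hcT hac.ne).symm)
    have hjk : j ≠ k := by
      rintro rfl
      exact (hd b hb c hcT hbc.ne) (by rw [← hj, ← hk])
    have la := hP a ha
    have lb := hP b hb
    have lc := hP c hcT
    rw [← hi] at la
    rw [← hj] at lb
    rw [← hk] at lc
    rcases Nat.lt_or_gt_of_ne hjk with h' | h'
    · exact main i j k _ _ _ _ _ _ hj1 h' hk2 la lb lc hab.ne hbc.ne hac.ne
    · exact main i k j _ _ _ _ _ _ hk1 h' hj2 la lc lb hac.ne hbc.ne.symm hab.ne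
  · have hS : ∀ i j t t' p q, i < j → j < i + L → Lab G T (Set.range f) t p (f i) →
        Lab G T (Set.range f) t' q (f j) → ((j - i) % 4 = 2 ∨ (j - i) % 4 = 3) → t = t' := by
      intro i j t t' p q h1 h2 hp hq hij
      by_contra hne
      have := hdiff i j t t' p q h1 h2 hp hq hne
      omega
    have hD : ∀ i j t t' p q, i < j → j < i + L → Lab G T (Set.range f) t p (f i) →
        Lab G T (Set.range f) t' q (f j) → ((j - i) % 4 = 0 ∨ (j - i) % 4 = 1) → t ≠ t' := by
      rintro i j t t' p q h1 h2 hp hq hij rfl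
      have := hsame i j t p q h1 h2 hp hq
      omega
    have hcons : ∀ i, (∃ t p, Lab G T (Set.range f) t p (f i)) →
        (∃ t p, Lab G T (Set.range f) t p (f (i + 1))) →
        (∃ t p, Lab G T (Set.range f) t p (f (i + 3))) → False := by
      rintro i ⟨t0, p0, h0⟩ ⟨t1, p1, h1⟩ ⟨t3, p3, h3⟩
      have s1 := hS i (i + 3) _ _ _ _ (by omega) (by omega) h0 h3 (by omega)
      have s2 := hS (i + 1) (i + 3) _ _ _ _ (by omega) (by omega) h1 h3 (by omega)
      exact hD i (i + 1) _ _ _ _ (by omega) (by omega) h0 h1 (by omega) (s1.trans s2.symm)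
    obtain ⟨i, hi⟩ := (hP a ha).2.1
    have la := hP a ha
    rw [← hi] at la
    have l0 : ∃ t p, Lab G T (Set.range f) t p (f i) := ⟨_, _, la⟩
    by_cases hc : ∃ k, (∃ t p, Lab G T (Set.range f) t p (f k)) ∧
        (∃ t p, Lab G T (Set.range f) t p (f (k + 1)))
    · obtain ⟨k, k0, k1⟩ := hc
      have k3 : ¬ ∃ t p, Lab G T (Set.range f) t p (f (k + 3)) := hcons k k0 k1
      have k2 := (h.dense (k + 1)).resolve_right k3
      have k4 := (h.dense (k + 2)).resolve_left k3
      exact hcons (k + 1) k1 k2 k4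
    · push Not at hc
      have i1 : ¬ ∃ t p, Lab G T (Set.range f) t p (f (i + 1)) := by
        rintro ⟨t, p, h⟩
        exact hc i l0 t p h
      obtain ⟨t2, p2, i2⟩ := (h.dense i).resolve_left i1
      have i3 : ¬ ∃ t p, Lab G T (Set.range f) t p (f (i + 3)) := by
        rintro ⟨t, p, h⟩
        exact hc (i + 2) ⟨t2, p2, i2⟩ t p h
      obtain ⟨t4, p4, i4⟩ := (h.dense (i + 2)).resolve_left i3
      have s1 := hS i (i + 2) _ _ _ _ (by omega) (by omega) la i2 (by omega)
      have s2 := hS (i + 2) (i + 4) _ _ _ _ (by omega) (by omega) i2 i4 (by omega)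
      exact hD i (i + 4) _ _ _ _ (by omega) (by omega) la i4 (by omega) (s1.trans s2)

/-- Every cycle off the triangle is a triangle. -/
theorem Core.only_tri [Finite V] (h : Core G T) {x : V} {p : List V}
    (hp : PW G x p x) (hnd : (x :: p).Nodup) (hl : 2 ≤ p.length) (hT : ∀ z ∈ x :: p, z ∉ T) :
    p.length = 2 := by
  obtain ⟨f, hf, hr⟩ := exists_cyc hp hnd hl
  have hoff : ∀ z ∈ Set.range f, z ∉ T := by rw [hr]; exact hT
  rcases h.cyc_mod hf hoff with h3 | ⟨h5, -⟩
  · omega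
  · exact (CC.false ⟨h, hf, hoff, h5⟩).elim

theorem Core.tri_deg [Finite V] (h : Core G T) {C : Set V} (hC : Tri G C)
    (hCT : ∀ z ∈ C, z ∉ T) : ∃ z ∈ C, ∀ n, G.Adj z n → n ∈ C := by
  by_contra hcon
  push Not at hcon
  exact two_tri h.nc h.ess h.tri hC hCT h.out hcon

end cyclecase2


section forest
variable {V : Type*} {G : SimpleGraph V} {T : Set V}

theorem Tri.all (h : Tri G T) {a b c : V} (ha : a ∈ T) (hb : b ∈ T) (hc : c ∈ T) (hab : a ≠ b)
    (hbc : b ≠ c) (hac : a ≠ c) : ∀ r ∈ T, r = a ∨ r = b ∨ r = c := by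
  obtain ⟨s, hs, h1, h2, h3⟩ := h.third ha hb hab
  have := h3 c hc
  intro r hr
  have := h3 r hr
  grind

theorem PW.cn_mem {U : Set V} {x y : V} {p : List V} (h : PW G x p y) (hx : x ∈ U)
    (hp : ∀ z ∈ p, z ∈ U) : ∀ z ∈ p, Cn G U x z := by
  intro z hz
  obtain ⟨p1, p2, rfl⟩ := List.append_of_mem hz
  exact (PW.split.1 h).1.cn hx (hp z hz) (fun w hw => hp w (by simp [hw]))

theorem Core.F1 (h : Core G T) {z t t' : V} (hz : z ∉ T) (ht : t ∈ T) (ht' : t' ∈ T)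
    (h1 : G.Adj z t) (h2 : G.Adj z t') : t = t' := by
  by_contra hne
  have := PC_diff h.nc h.tri (p := [z]) ht ht' hne
    (by simp [PW.cons_iff, PW.nil_iff, h1.symm, h2]) (by simp) (by simpa using hz) (by simp)
  simp at this

theorem Core.F2 (h : Core G T) {u m t t' : V} (hu : u ∉ T) (hm : m ∉ T) (hum : G.Adj u m)
    (ht : t ∈ T) (ht' : t' ∈ T) (h1 : G.Adj u t) (h2 : G.Adj m t') : t = t' := by
  by_contra hne
  have := PC_diff h.nc h.tri (p := [u, m]) ht ht' hne
    (by simp [PW.cons_iff, PW.nil_iff, h1.symm, h2, hum]) (by simpa using hum.ne)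
    (by simp [hu, hm]) (by simp)
  simp at this

theorem Core.wnbr (h : Core G T) {n b : V} (hn : n ∉ T) (hb : b ∈ T) (hnb : G.Adj n b) :
    ∃ m, m ∉ T ∧ G.Adj n m := by
  obtain ⟨m, hm, hnm⟩ := h.deg n b hnb
  exact ⟨m, fun hmT => hm (h.F1 hn hmT hb hnm hnb), hnm⟩

theorem Core.esc (h : Core G T) {Q : Set V} {o l u m : V} (hQT : ∀ z ∈ Q, z ∉ T)
    (hl : l ∈ T) (ho : o ∉ T ∨ o = l) (hQ : ∀ z ∈ Q, ∀ w, G.Adj z w → w ∈ Q ∨ w = o ∨ w = l)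
    (hu : u ∈ Q) (hm : m ∈ Q) (hum : G.Adj u m) (huo : u ≠ o) (hmo : m ≠ o) : False := by
  obtain ⟨s, hs, hsl⟩ := h.tri.other hl
  obtain ⟨s', hs', h1, h2, -⟩ := h.tri.third hl hs hsl.symm
  have hnl : ∀ z ∈ Q, z ≠ l := fun z hz he => hQT z hz (he ▸ hl)
  have hTo : ∀ t ∈ T, t ≠ l → t ∉ ({o, l} : Set V) := by
    intro t ht htl h3
    simp only [Set.mem_insert_iff, Set.mem_singleton_iff] at h3
    rcases ho with ho | ho <;> rcases h3 with h3 | h3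
    · exact ho (h3 ▸ ht)
    · exact htl h3
    · exact htl (h3.trans ho)
    · exact htl h3
  have hQo : ∀ z ∈ Q, z ≠ o → z ∉ ({o, l} : Set V) := by
    intro z hz hzo h3
    simp only [Set.mem_insert_iff, Set.mem_singleton_iff] at h3
    rcases h3 with h3 | h3
    · exact hzo h3
    · exact hnl z hz h3
  have hc := h.ess {o, l} (ncard_pair_le _ _) u m s s' hum (h.tri.adj hs hs' h2.symm)
    (hQo u hu huo) (hQo m hm hmo) (hTo s hs hsl) (hTo s' hs' h1)
  have : s ∈ Q := hc.closed hu (by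
    intro z hz w hzw hw
    rcases hQ z hz w hzw with h' | h' | h'
    · exact h'
    · exact absurd (by simp [h']) hw
    · exact absurd (by simp [h']) hw)
  exact hQT s this hs

theorem Core.reach (h : Core G T) {n b c : V} (hn : n ∉ T) (hb : b ∈ T) (hnb : G.Adj n b)
    (hc : c ∈ T) : ∃ z, Cn G Tᶜ n z ∧ G.Adj z c := by
  by_contra hcon
  push Not at hcon
  obtain ⟨n2, hn2, hnn⟩ := h.wnbr hn hb hnb
  obtain ⟨s, hs, hsc⟩ := h.tri.other hc
  obtain ⟨s', hs', h1, h2, h3⟩ := h.tri.third hc hs hsc.symm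
  obtain ⟨o, hco, hoT⟩ := h.out c hc
  have hSn : ∀ z, z ∉ T → z ∉ ({s, s'} : Set V) := by
    intro z hz h4
    simp only [Set.mem_insert_iff, Set.mem_singleton_iff] at h4
    rcases h4 with rfl | rfl
    · exact hz hs
    · exact hz hs'
  have hcS : c ∉ ({s, s'} : Set V) := by
    simp only [Set.mem_insert_iff, Set.mem_singleton_iff]
    rintro (h4 | h4)
    · exact hsc h4.symm
    · exact h1 h4.symm
  have hcn := h.ess {s, s'} (ncard_pair_le _ _) n n2 c o hnn hco (hSn n hn) (hSn n2 hn2) hcS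
    (hSn o hoT)
  have : c ∈ {z | Cn G Tᶜ n z} := hcn.closed Relation.ReflTransGen.refl (by
    intro z hz w hzw hw
    have hz' : Cn G Tᶜ n z := hz
    have hzT : z ∈ Tᶜ := hz'.mem hn
    by_cases hwT : w ∈ T
    · exfalso
      simp only [Set.mem_compl_iff, Set.mem_insert_iff, Set.mem_singleton_iff, not_or] at hw
      have : w = c := by
        have := h3 w hwT; tauto
      exact hcon z hz' (this ▸ hzw)
    · exact hz'.trans (Cn.single hzw hzT hwT))
  have h5 : Cn G Tᶜ n c := this
  exact h5.mem hn hc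

/-- A pair of triangle vertices joined through the component of `n` by a path of length 0 mod 4. -/
def ZP (G : SimpleGraph V) (T : Set V) (n t t' : V) : Prop :=
  ∃ p : List V, PW G t p t' ∧ p.Nodup ∧ (∀ z ∈ p, Cn G Tᶜ n z) ∧ p.length % 4 = 3

theorem ZP.symm {n t t' : V} (h : ZP G T n t t') : ZP G T n t' t := by
  obtain ⟨p, h1, h2, h3, h4⟩ := h
  exact ⟨p.reverse, h1.rev, by simpa using h2, by simpa using h3, by simpa using h4⟩

theorem Core.zero (h : Core G T) {n b : V} (hn : n ∉ T) (hb : b ∈ T) (hnb : G.Adj n b) :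
    ∃ t ∈ T, ∃ t' ∈ T, t ≠ t' ∧ ZP G T n t t' := by
  obtain ⟨c, hc, hcb⟩ := h.tri.other hb
  obtain ⟨a, ha, hab, hac, -⟩ := h.tri.third hb hc hcb.symm
  obtain ⟨zc, hzc, hzca⟩ := h.reach hn hb hnb hc
  obtain ⟨za, hza, hzaa⟩ := h.reach hn hb hnb ha
  have hmem : ∀ z, Cn G Tᶜ n z → z ∉ T := fun z hz => hz.mem hn
  obtain ⟨p, hp, hpn, hpD, hnp⟩ : ∃ p, PW G b p c ∧ p.Nodup ∧ (∀ z ∈ p, Cn G Tᶜ n z) ∧ n ∈ p := by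
    rcases first_hit (X := {z | G.Adj z c}) hzc hzca with h0 | ⟨h0, w, hw, hwU, p, hp, hnd, hpU⟩
    · exact absurd (h.F1 hn hc hb h0 hnb) hcb
    · have hall : ∀ z ∈ p ++ [w], z ∈ Tᶜ := by
        intro z hz
        rw [List.mem_append, List.mem_singleton] at hz
        rcases hz with hz | rfl
        · exact (hpU z hz).1
        · exact hwU
      have hfull : PW G n (p ++ [w]) c := hp.glue (PW.nil_iff.2 hw)
      refine ⟨n :: (p ++ [w]), PW.cons_iff.2 ⟨hnb.symm, hfull⟩, hnd, ?_, by simp⟩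
      intro z hz
      rcases List.mem_cons.1 hz with rfl | hz
      · exact Relation.ReflTransGen.refl
      · exact hfull.cn_mem hn hall z hz
  obtain ⟨v, hv, q, hq, hqn, hqD, hqp⟩ : ∃ v ∈ p, ∃ q, PW G a q v ∧ q.Nodup ∧
      (∀ z ∈ q, Cn G Tᶜ n z) ∧ ∀ z ∈ q, z ∉ p := by
    rcases yx (X := {z | G.Adj z a}) (Y := {z | z ∈ p}) hza hn hnp hzaa with
      ⟨v, hvX, hvY, -⟩ | ⟨v, w, r, hvY, hwX, hvX, hwY, hvU, hwU, hr, hrn, hrU⟩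
    · exact ⟨v, hvY, [], PW.nil_iff.2 (SimpleGraph.Adj.symm hvX), by simp, by simp, by simp⟩
    · refine ⟨v, hvY, w :: r.reverse, PW.cons_iff.2 ⟨SimpleGraph.Adj.symm hwX, hr.rev⟩, ?_, ?_, ?_⟩
      · simp only [List.nodup_cons, List.nodup_append, List.mem_append, List.mem_cons,
          List.mem_reverse, List.nodup_reverse] at *
        grind
      · have hvD := hpD v hvY
        have hfull : PW G v (r ++ [w]) a := hr.glue (PW.nil_iff.2 hwX)
        have := hfull.cn_mem (U := Tᶜ) hvU (by
          intro z hz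
          rw [List.mem_append, List.mem_singleton] at hz
          rcases hz with hz | rfl
          · exact (hrU z hz).1
          · exact hwU)
        intro z hz
        refine hvD.trans (this z ?_)
        simp only [List.mem_cons, List.mem_reverse, List.mem_append] at *
        tauto
      · intro z hz
        simp only [List.mem_cons, List.mem_reverse] at hz
        rcases hz with rfl | hz
        · exact hwY
        · exact (hrU z hz).2.2
  obtain ⟨p1, p2, rfl⟩ := List.append_of_mem hv
  obtain ⟨g1, g2⟩ := PW.split.1 hp
  have w1 : PW G a (q ++ v :: p1.reverse) b := hq.glue g1.rev
  have w2 : PW G a (q ++ v :: p2) c := hq.glue g2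
  have n1 : (q ++ v :: p1.reverse).Nodup := by
    simp only [List.nodup_cons, List.nodup_append, List.mem_append, List.mem_cons,
      List.mem_reverse, List.nodup_reverse] at *
    grind
  have n2 : (q ++ v :: p2).Nodup := by
    simp only [List.nodup_cons, List.nodup_append, List.mem_append, List.mem_cons] at *
    grind
  have d1 : ∀ z ∈ q ++ v :: p1.reverse, Cn G Tᶜ n z := by
    simp only [List.mem_append, List.mem_cons, List.mem_reverse] at *
    grind
  have d2 : ∀ z ∈ q ++ v :: p2, Cn G Tᶜ n z := by
    simp only [List.mem_append, List.mem_cons] at *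
    grind
  have l0 := PC_diff h.nc h.tri hb hc hcb.symm hp hpn (fun z hz => hmem z (hpD z hz)) (by simp)
  have l1 := PC_diff h.nc h.tri ha hb hab w1 n1 (fun z hz => hmem z (d1 z hz)) (by simp)
  have l2 := PC_diff h.nc h.tri ha hc hac w2 n2 (fun z hz => hmem z (d2 z hz)) (by simp)
  by_cases e0 : (p1 ++ v :: p2).length % 4 = 3
  · exact ⟨b, hb, c, hc, hcb.symm, _, hp, hpn, hpD, e0⟩
  by_cases e1 : (q ++ v :: p1.reverse).length % 4 = 3
  · exact ⟨a, ha, b, hb, hab, _, w1, n1, d1, e1⟩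
  by_cases e2 : (q ++ v :: p2).length % 4 = 3
  · exact ⟨a, ha, c, hc, hac, _, w2, n2, d2, e2⟩
  exfalso
  simp only [List.length_append, List.length_cons, List.length_reverse] at *
  omega

end forest


section forest2
variable {V : Type*} {G : SimpleGraph V} {T : Set V}

/-- A longest path avoiding `T`. -/
structure MaxL (G : SimpleGraph V) (T : Set V) (l : List V) : Prop where
  ch : l.IsChain G.Adj
  nd : l.Nodup
  out : ∀ z ∈ l, z ∉ T
  mx : ∀ l' : List V, l'.IsChain G.Adj → l'.Nodup → (∀ z ∈ l', z ∉ T) → l'.length ≤ l.length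

theorem MaxL.rev {l : List V} (h : MaxL G T l) : MaxL G T l.reverse where
  ch := by
    rw [List.isChain_reverse]
    exact h.ch.imp fun a b hab => hab.symm
  nd := by simpa using h.nd
  out := by simpa using h.out
  mx := by simpa using h.mx

theorem MaxL.of_len {l l' : List V} (h : MaxL G T l) (hc : l'.IsChain G.Adj) (hn : l'.Nodup)
    (ho : ∀ z ∈ l', z ∉ T) (hl : l'.length = l.length) : MaxL G T l' :=
  ⟨hc, hn, ho, by rw [hl]; exact h.mx⟩

/-- `u` is a leaf attached at `m` with triangle neighbour `t`. -/
structure Leaf (G : SimpleGraph V) (T : Set V) (u m t : V) : Prop where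
  nu : u ∉ T
  nm : m ∉ T
  mem : t ∈ T
  am : G.Adj u m
  atri : G.Adj u t
  all : ∀ w, G.Adj u w → w = m ∨ w = t

theorem MaxL.exists [Finite V] {u m : V} (hu : u ∉ T) (hm : m ∉ T) (hum : G.Adj u m) :
    ∃ l, MaxL G T l ∧ 2 ≤ l.length := by
  classical
  have := Fintype.ofFinite V
  let P : ℕ → Prop := fun k => ∃ l : List V, l.IsChain G.Adj ∧ l.Nodup ∧ (∀ z ∈ l, z ∉ T) ∧
    l.length = k
  have hb : ∀ k, P k → k ≤ Fintype.card V := by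
    rintro k ⟨l, -, hn, -, rfl⟩
    exact hn.length_le_card
  have h2 : P 2 := ⟨[u, m], by simpa using hum, by simpa using hum.ne, by simp [hu, hm], rfl⟩
  obtain ⟨l, h1, h3, h4, h5⟩ := Nat.findGreatest_spec (P := P) (hb 2 h2) h2
  refine ⟨l, ⟨h1, h3, h4, ?_⟩, ?_⟩
  · intro l' c1 c2 c3
    rw [h5]
    exact Nat.le_findGreatest (hb _ ⟨l', c1, c2, c3, rfl⟩) ⟨l', c1, c2, c3, rfl⟩
  · rw [h5]
    exact Nat.le_findGreatest (hb _ h2) h2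

theorem chain_pw {x w : V} {A B : List V} (h : (x :: (A ++ w :: B)).IsChain G.Adj) :
    PW G x A w := by
  have e : x :: (A ++ w :: B) = (x :: (A ++ [w])) ++ B := by simp
  rw [e] at h
  exact h.left_of_append

variable [Finite V]

theorem Core.L0 (h : Core G T) {u m w : V} {r : List V} (hl : MaxL G T (u :: m :: r))
    (hw : w ∉ T) (huw : G.Adj u w) : w = m ∨ ∃ r2, r = w :: r2 := by
  by_cases hwm : w = m
  · exact Or.inl hwm
  right
  have hch := hl.ch
  have hnd := hl.nd
  have hout := hl.out
  by_cases hwr : w ∈ r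
  · obtain ⟨A, B, rfl⟩ := List.append_of_mem hwr
    have hp : PW G u (m :: A) w := chain_pw (B := B) (by simpa using hch)
    have hc : PW G u (m :: A ++ [w]) u := hp.glue (PW.nil_iff.2 huw.symm)
    have := h.only_tri hc (by
      simp only [List.nodup_cons, List.nodup_append, List.mem_append, List.mem_cons,
        List.cons_append] at *
      grind) (by simp) (by
      intro z hz
      apply hout
      simp at *
      tauto)
    simp at this
    subst this
    exact ⟨B, rfl⟩
  · have := hl.mx (w :: u :: m :: r) (by simpa using ⟨huw.symm, by simpa using hch⟩) (by
      rw [List.nodup_cons]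
      refine ⟨?_, hnd⟩
      simp [huw.ne', hwm, hwr]) (by
      intro z hz
      rcases List.mem_cons.1 hz with rfl | hz
      · exact hw
      · exact hout z hz)
    simp at this

theorem Core.L1 (h : Core G T) {u m : V} {r : List V} (hl : MaxL G T (u :: m :: r)) :
    ∃ t, Leaf G T u m t := by
  have hch := hl.ch
  have hnd := hl.nd
  have hout := hl.out
  have hu : u ∉ T := hout u (by simp)
  have hm : m ∉ T := hout m (by simp)
  have hum : G.Adj u m := by simp at hch; exact hch.1
  by_cases hex : ∃ w, w ∉ T ∧ w ≠ m ∧ G.Adj u w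
  · exfalso
    obtain ⟨w, hw, hwm, huw⟩ := hex
    rcases h.L0 hl hw huw with h0 | ⟨r2, rfl⟩
    · exact hwm h0
    have hl2 : MaxL G T (m :: u :: w :: r2) := hl.of_len (by
        simp at hch ⊢
        exact ⟨hum.symm, huw, hch.2.2⟩) (by
        simp only [List.nodup_cons, List.mem_cons] at *
        grind) (by
        intro z hz
        apply hout
        simp at *
        tauto) (by simp)
    have hmW : ∀ v, v ∉ T → G.Adj m v → v = u ∨ v = w := by
      intro v hv hmv
      rcases h.L0 hl2 hv hmv with h0 | ⟨r3, h0⟩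
      · exact Or.inl h0
      · simp at h0; exact Or.inr h0.1.symm
    have huW : ∀ v, v ∉ T → G.Adj u v → v = m ∨ v = w := by
      intro v hv hmv
      rcases h.L0 hl hv hmv with h0 | ⟨r3, h0⟩
      · exact Or.inl h0
      · simp at h0; exact Or.inr h0.1.symm
    obtain ⟨l, hlT, hll⟩ : ∃ l ∈ T, ∀ t ∈ T, G.Adj u t ∨ G.Adj m t → t = l := by
      by_cases hE : ∃ t ∈ T, G.Adj u t ∨ G.Adj m t
      · obtain ⟨t, ht, hE⟩ := hE
        refine ⟨t, ht, fun s hs hsE => ?_⟩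
        rcases hE with hE | hE <;> rcases hsE with hsE | hsE
        · exact h.F1 hu hs ht hsE hE
        · exact (h.F2 hu hm hum ht hs hE hsE).symm
        · exact h.F2 hu hm hum hs ht hsE hE
        · exact h.F1 hm hs ht hsE hE
      · push Not at hE
        obtain ⟨a, b, c, -, -, -, rfl⟩ := h.tri
        refine ⟨a, by simp, fun t ht htE => ?_⟩
        have := hE t ht
        tauto
    refine h.esc (Q := {u, m}) (o := w) (l := l) (u := u) (m := m) ?_ hlT (Or.inl hw) ?_ (by simp)
      (by simp) hum huw.ne (Ne.symm hwm)
    · rintro z (rfl | rfl)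
      · exact hu
      · exact hm
    · rintro z (rfl | rfl) v hzv
      · by_cases hv : v ∈ T
        · exact Or.inr (Or.inr (hll v hv (Or.inl hzv)))
        · rcases huW v hv hzv with h0 | h0 <;> simp [h0]
      · by_cases hv : v ∈ T
        · exact Or.inr (Or.inr (hll v hv (Or.inr hzv)))
        · rcases hmW v hv hzv with h0 | h0 <;> simp [h0]
  · push Not at hex
    obtain ⟨t, htm, hut⟩ := h.deg u m hum
    have ht : t ∈ T := by
      by_contra ht
      exact hex t ht htm hut
    refine ⟨t, hu, hm, ht, hum, hut, fun w hw => ?_⟩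
    by_cases hwT : w ∈ T
    · exact Or.inr (h.F1 hu hwT ht hw hut)
    · left
      by_contra hwm
      exact hex w hwT hwm hw

theorem Core.L2 (h : Core G T) {u m : V} (hl : MaxL G T [u, m]) : False := by
  obtain ⟨t, ht⟩ := h.L1 hl
  obtain ⟨s, hs⟩ := h.L1 (by simpa using hl.rev : MaxL G T [m, u])
  have e : t = s := h.F2 ht.nu ht.nm ht.am ht.mem hs.mem ht.atri hs.atri
  subst e
  refine h.esc (Q := {u, m}) (o := t) (l := t) (u := u) (m := m) ?_ ht.mem (Or.inr rfl) ?_ (by simp)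
      (by simp) ht.am ht.atri.ne hs.atri.ne
  · rintro z (rfl | rfl)
    · exact ht.nu
    · exact ht.nm
  · rintro z (rfl | rfl) v hzv
    · rcases ht.all v hzv with h0 | h0 <;> simp [h0]
    · rcases hs.all v hzv with h0 | h0 <;> simp [h0]

theorem Core.same_letter (h : Core G T) {u v m t : V} (hu : Leaf G T u m t) (hv : Leaf G T v m t) :
    u = v := by
  by_contra hne
  have := PC_same h.nc (p := [u, m, v]) hu.mem
    (by simp [PW.cons_iff, PW.nil_iff, hu.atri.symm, hv.atri, hu.am, hv.am.symm])
    (by simp [hu.am.ne, hne, hv.am.ne']) (by simp [hu.nu, hu.nm, hv.nu]) (by simp)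
  simp at this

theorem Core.L3 (h : Core G T) {u m t : V} {r : List V} (hl : MaxL G T (u :: m :: r))
    (hr : r ≠ []) (hut : Leaf G T u m t) :
    ∃ v t', v ∉ u :: m :: r ∧ Leaf G T v m t' ∧ t' ≠ t ∧ MaxL G T (v :: m :: r) := by
  have hch := hl.ch
  have hnd := hl.nd
  have hout := hl.out
  by_cases hex : ∃ v, v ∉ T ∧ G.Adj m v ∧ v ∉ u :: m :: r
  · obtain ⟨v, hv, hmv, hvl⟩ := hex
    have hl2 : MaxL G T (v :: m :: r) := hl.of_len (by
        simp at hch ⊢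
        exact ⟨hmv.symm, hch.2⟩) (by
        simp only [List.nodup_cons, List.mem_cons] at *
        grind) (by
        intro z hz
        rcases List.mem_cons.1 hz with rfl | hz
        · exact hv
        · exact hout z (List.mem_cons_of_mem _ hz)) (by simp)
    obtain ⟨t', ht'⟩ := h.L1 hl2
    refine ⟨v, t', hvl, ht', ?_, hl2⟩
    rintro rfl
    have := h.same_letter hut ht'
    exact hvl (by simp [this])
  · exfalso
    push Not at hex
    obtain ⟨w, r2, rfl⟩ := List.exists_cons_of_ne_nil hr
    have hw : w ∉ T := hout w (by simp)
    have hmw : G.Adj m w := by simp at hch; exact hch.2.1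
    have huw : u ≠ w := by simp at hnd; tauto
    have hmT : ∀ s ∈ T, G.Adj m s → s = t := fun s hs hms =>
      (h.F2 hut.nu hut.nm hut.am hut.mem hs hut.atri hms).symm
    have hmW : ∀ v, v ∉ T → G.Adj m v → v = u ∨ v = w ∨ ∃ B, r2 = v :: B := by
      intro v hv hmv
      have := hex v hv hmv
      simp only [List.mem_cons] at this
      rcases this with h0 | h0 | h0 | h0
      · exact Or.inl h0
      · exact absurd h0 hmv.ne'
      · exact Or.inr (Or.inl h0)
      · obtain ⟨A, B, rfl⟩ := List.append_of_mem h0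
        have hp : PW G m (w :: A) v := chain_pw (B := B) (by simp at hch ⊢; exact hch.2)
        have hc : PW G m (w :: A ++ [v]) m := hp.glue (PW.nil_iff.2 hmv.symm)
        have := h.only_tri hc (by
          simp only [List.nodup_cons, List.nodup_append, List.mem_append, List.mem_cons,
            List.cons_append] at *
          grind) (by simp) (by
          intro z hz
          apply hout
          simp at *
          tauto)
        simp at this
        subst this
        exact Or.inr (Or.inr ⟨B, rfl⟩)
    have huv : ∀ v, G.Adj u v → v = m ∨ v = t := hut.all
    by_cases hy : ∃ y B, r2 = y :: B ∧ G.Adj m y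
    · obtain ⟨y, B, rfl, hmy⟩ := hy
      have hyT : y ∉ T := hout y (by simp)
      have hwy : G.Adj w y := by simp at hch; exact hch.2.2.1
      have hmW' : ∀ v, G.Adj m v → v = u ∨ v = w ∨ v = y ∨ v = t := by
        intro v hmv
        by_cases hv : v ∈ T
        · exact Or.inr (Or.inr (Or.inr (hmT v hv hmv)))
        · rcases hmW v hv hmv with h0 | h0 | ⟨B', h0⟩
          · simp [h0]
          · simp [h0]
          · simp at h0; simp [h0.1]
      have huy : u ≠ y := by simp at hnd; tauto
      have hum := hut.am
      obtain ⟨z, hz, hzn⟩ := h.tri_deg (C := {m, w, y}) ⟨m, w, y, hmw, hwy, hmy, rfl⟩ (by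
        rintro z (rfl | rfl | rfl)
        · exact hut.nm
        · exact hw
        · exact hyT)
      rcases hz with rfl | rfl | rfl
      · have := hzn u hum.symm
        simp [huy, huw, hum.ne] at this
      · refine h.esc (Q := {u, m, z}) (o := y) (l := t) (u := u) (m := m) ?_ hut.mem (Or.inl hyT) ?_
          (by simp) (by simp) hum huy hmy.ne
        · rintro x (rfl | rfl | rfl)
          · exact hut.nu
          · exact hut.nm
          · exact hw
        · rintro x (rfl | rfl | rfl) v hv
          · rcases huv v hv with h0 | h0 <;> simp [h0]
          · rcases hmW' v hv with h0 | h0 | h0 | h0 <;> simp [h0]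
          · have := hzn v hv
            simp at this ⊢
            tauto
      · refine h.esc (Q := {u, m, z}) (o := w) (l := t) (u := u) (m := m) ?_ hut.mem (Or.inl hw) ?_
          (by simp) (by simp) hum huw hmw.ne
        · rintro x (rfl | rfl | rfl)
          · exact hut.nu
          · exact hut.nm
          · exact hyT
        · rintro x (rfl | rfl | rfl) v hv
          · rcases huv v hv with h0 | h0 <;> simp [h0]
          · rcases hmW' v hv with h0 | h0 | h0 | h0 <;> simp [h0]
          · have := hzn v hv
            simp at this ⊢
            tauto
    · refine h.esc (Q := {u, m}) (o := w) (l := t) (u := u) (m := m) ?_ hut.mem (Or.inl hw) ?_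
          (by simp) (by simp) hut.am huw hmw.ne
      · rintro x (rfl | rfl)
        · exact hut.nu
        · exact hut.nm
      · rintro x (rfl | rfl) v hv
        · rcases huv v hv with h0 | h0 <;> simp [h0]
        · by_cases hvT : v ∈ T
          · exact Or.inr (Or.inr (hmT v hvT hv))
          · rcases hmW v hvT hv with h0 | h0 | ⟨B', h0⟩
            · simp [h0]
            · simp [h0]
            · exact absurd ⟨v, B', h0, hv⟩ hy

theorem Core.star_zp (h : Core G T) {x1 x2 m t1 t2 n : V} (h1 : Leaf G T x1 m t1)
    (h2 : Leaf G T x2 m t2) (hne : t1 ≠ t2) (hn : n ∉ T) (hz : ZP G T n t1 t2)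
    (hm : ¬ Cn G Tᶜ n m) : False := by
  obtain ⟨p, hp, hnd, hD, hl⟩ := hz
  have hx : x1 ≠ x2 := by
    rintro rfl
    exact hne (h.F1 h1.nu h1.mem h2.mem h1.atri h2.atri)
  have hx1 : ¬ Cn G Tᶜ n x1 := fun hc => hm (hc.trans (Cn.single h1.am h1.nu h1.nm))
  have hx2 : ¬ Cn G Tᶜ n x2 := fun hc => hm (hc.trans (Cn.single h2.am h2.nu h2.nm))
  have := PC_two h.nc (p := [x1, m, x2]) h1.mem h2.mem hne
    (by simp [PW.cons_iff, PW.nil_iff, h1.atri.symm, h2.atri, h1.am, h2.am.symm])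
    (by simp [h1.am.ne, hx, h2.am.ne']) (by simp [h1.nu, h1.nm, h2.nu]) hp hnd
    (fun z hz => (hD z hz).mem hn) (by
      intro z hz hzp
      have := hD z hzp
      simp only [List.mem_cons, List.not_mem_nil, or_false] at hz
      rcases hz with rfl | rfl | rfl
      · exact hx1 this
      · exact hm this
      · exact hx2 this) (by simp)
  simp only [List.length_cons, List.length_nil] at this
  omega

theorem Core.star (h : Core G T) {u m w : V} (hl : MaxL G T [u, m, w]) : False := by
  obtain ⟨t, hu⟩ := h.L1 hl
  obtain ⟨v, t', hvl, hv, htt, hl2⟩ := h.L3 hl (by simp) hu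
  obtain ⟨s, hw⟩ := h.L1 (by simpa using hl.rev : MaxL G T [w, m, u])
  have hnd := hl.nd
  simp at hnd hvl
  have hst : s ≠ t := by
    rintro rfl
    have := h.same_letter hu hw
    tauto
  have hst' : s ≠ t' := by
    rintro rfl
    have := h.same_letter hv hw
    tauto
  have hall := h.tri.all hu.mem hv.mem hw.mem htt.symm hst'.symm hst.symm
  have hleaf : ∀ r ∈ T, ∃ x, Leaf G T x m r := by
    intro r hr
    rcases hall r hr with rfl | rfl | rfl
    · exact ⟨u, hu⟩
    · exact ⟨v, hv⟩
    · exact ⟨w, hw⟩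
  have hmW : ∀ x, x ∉ T → G.Adj m x → x = u ∨ x = v ∨ x = w := by
    intro x hx hmx
    by_contra hcon
    push Not at hcon
    have hl3 : MaxL G T [x, m, w] := hl.of_len (by simp [hmx.symm, hw.am.symm])
      (by simp [hmx.ne', hcon, hw.am.ne']) (by simp [hx, hw.nm, hw.nu]) (by simp)
    obtain ⟨tx, hxl⟩ := h.L1 hl3
    rcases hall tx hxl.mem with rfl | rfl | rfl
    · exact hcon.1 (h.same_letter hxl hu)
    · exact hcon.2.1 (h.same_letter hxl hv)
    · exact hcon.2.2 (h.same_letter hxl hw)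
  obtain ⟨n, hnu, htn, hn⟩ : ∃ n, n ≠ u ∧ G.Adj t n ∧ n ∉ T := by
    obtain ⟨n, n', hnn, h1, h2, h3, h4⟩ := h.two t hu.mem
    by_cases hnu : n = u
    · exact ⟨n', fun h0 => hnn (hnu.trans h0.symm), h2, h4⟩
    · exact ⟨n, hnu, h1, h3⟩
  have hcn : ¬ Cn G Tᶜ n m := by
    intro hc
    have : n ∈ ({m, u, v, w} : Set V) := hc.symm.closed (by simp) (by
      rintro z (rfl | rfl | rfl | rfl) x hzx hx
      · have := hmW x hx hzx
        simp; tauto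
      · rcases hu.all x hzx with rfl | rfl
        · simp
        · exact absurd hu.mem hx
      · rcases hv.all x hzx with rfl | rfl
        · simp
        · exact absurd hv.mem hx
      · rcases hw.all x hzx with rfl | rfl
        · simp
        · exact absurd hw.mem hx)
    rcases this with rfl | rfl | rfl | rfl
    · exact htt (h.F2 hv.nu hv.nm hv.am hv.mem hu.mem hv.atri htn.symm)
    · exact hnu rfl
    · exact htt (h.F1 hv.nu hv.mem hu.mem hv.atri htn.symm)
    · exact hst (h.F1 hw.nu hw.mem hu.mem hw.atri htn.symm)
  obtain ⟨t1, ht1, t2, ht2, hne, hz⟩ := h.zero hn hu.mem htn.symm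
  obtain ⟨x1, hx1⟩ := hleaf t1 ht1
  obtain ⟨x2, hx2⟩ := hleaf t2 ht2
  exact h.star_zp hx1 hx2 hne hn hz hcn

end forest2


section forest3
variable {V : Type*} {G : SimpleGraph V} {T : Set V}

theorem Leaf.avoid {z k c n w : V} {p : List V} (hz : Leaf G T z k c) (hp : PW G n p w)
    (hk : ∀ y ∈ n :: p, y ≠ k ∧ y ∉ T) : z ∉ p := by
  intro hzp
  obtain ⟨p1, p2, rfl⟩ := List.append_of_mem hzp
  have h1 := (PW.split.1 hp).1
  have : ∃ y ∈ n :: p1, G.Adj y z := by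
    rcases List.eq_nil_or_concat p1 with rfl | ⟨q, y, rfl⟩
    · exact ⟨n, by simp, PW.nil_iff.1 h1⟩
    · refine ⟨y, by simp, ?_⟩
      rw [List.concat_eq_append] at h1
      exact PW.nil_iff.1 (PW.split.1 h1).2
  obtain ⟨y, hy, hyz⟩ := this
  have h2 := hk y (by simp at *; tauto)
  rcases hz.all y hyz.symm with h0 | h0
  · exact h2.1 h0
  · exact h2.2 (h0 ▸ hz.mem)

theorem Core.dbl [Finite V] (h : Core G T) {a b c a1 b1 a2 c2 m m' : V} {mid : List V}
    (hch : PW G m mid m') (hnd : (m :: (mid ++ [m'])).Nodup) (hout : ∀ z ∈ mid, z ∉ T)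
    (ha1 : Leaf G T a1 m a) (hb1 : Leaf G T b1 m b) (ha2 : Leaf G T a2 m' a)
    (hc2 : Leaf G T c2 m' c) (hab : a ≠ b) (hbc : b ≠ c) (hac : a ≠ c)
    (na1 : a1 ∉ m :: (mid ++ [m'])) (nb1 : b1 ∉ m :: (mid ++ [m']))
    (na2 : a2 ∉ m :: (mid ++ [m'])) (nc2 : c2 ∉ m :: (mid ++ [m'])) : False := by
  have hmm : m ≠ m' := by
    rintro rfl; simp at hnd
  have e12 : a1 ≠ a2 := by
    rintro rfl
    rcases ha1.all _ ha2.am with h0 | h0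
    · exact hmm h0.symm
    · exact ha2.nm (h0 ▸ ha1.mem)
  have eab : a1 ≠ b1 := by
    rintro rfl; exact hab (h.F1 ha1.nu ha1.mem hb1.mem ha1.atri hb1.atri)
  have eac : a1 ≠ c2 := by
    rintro rfl; exact hac (h.F1 ha1.nu ha1.mem hc2.mem ha1.atri hc2.atri)
  have eba : b1 ≠ a2 := by
    rintro rfl; exact hab (h.F1 hb1.nu ha2.mem hb1.mem ha2.atri hb1.atri)
  have ebc : b1 ≠ c2 := by
    rintro rfl; exact hbc (h.F1 hb1.nu hb1.mem hc2.mem hb1.atri hc2.atri)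
  have eac2 : a2 ≠ c2 := by
    rintro rfl; exact hac (h.F1 ha2.nu ha2.mem hc2.mem ha2.atri hc2.atri)
  have hXT : ∀ z ∈ m :: (mid ++ [m']), z ∉ T := by
    intro z hz
    simp only [List.mem_cons, List.mem_append, List.not_mem_nil, or_false] at hz
    rcases hz with rfl | hz | rfl
    · exact ha1.nm
    · exact hout z hz
    · exact ha2.nm
  have long : ∀ {x y s t : V}, Leaf G T x m s → Leaf G T y m' t →
      PW G s (x :: ((m :: (mid ++ [m'])) ++ [y])) t := by
    intro x y s t hx hy
    have : PW G s (x :: m :: (mid ++ m' :: [y])) t := by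
      rw [PW.cons_iff, PW.cons_iff]
      refine ⟨hx.atri.symm, hx.am, hch.glue ?_⟩
      rw [PW.cons_iff, PW.nil_iff]
      exact ⟨hy.am.symm, hy.atri⟩
    simpa using this
  have hXl : (m :: (mid ++ [m'])).length = mid.length + 2 := by simp
  have hmX : m ∈ m :: (mid ++ [m']) := by simp
  have hmX' : m' ∈ m :: (mid ++ [m']) := by simp
  have hX0 : ∃ r, m :: (mid ++ [m']) = m :: r := ⟨_, rfl⟩
  generalize m :: (mid ++ [m']) = X at *
  have na1T := ha1.nu
  have nb1T := hb1.nu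
  have na2T := ha2.nu
  have nc2T := hc2.nu
  have hlen : mid.length % 4 = 0 := by
    have g1 := PC_diff h.nc h.tri ha1.mem hc2.mem hac (long ha1 hc2) (by
      simp only [List.nodup_cons, List.nodup_append, List.mem_append, List.mem_cons] at *
      grind) (by
      simp only [List.mem_append, List.mem_cons] at *
      grind) (by simp)
    have g2 := PC_same h.nc ha1.mem (long ha1 ha2) (by
      simp only [List.nodup_cons, List.nodup_append, List.mem_append, List.mem_cons] at *
      grind) (by
      simp only [List.mem_append, List.mem_cons] at *
      grind) (by simp)
    simp only [List.length_append, List.length_cons, List.length_nil] at g1 g2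
    omega
  obtain ⟨n, hnb1, hbn, hn⟩ : ∃ n, n ≠ b1 ∧ G.Adj b n ∧ n ∉ T := by
    obtain ⟨n, n', hnn, h1, h2, h3, h4⟩ := h.two b hb1.mem
    by_cases hnu : n = b1
    · exact ⟨n', fun h0 => hnn (hnu.trans h0.symm), h2, h4⟩
    · exact ⟨n, hnu, h1, h3⟩
  by_cases hex : ∃ x ∈ X, Cn G Tᶜ n x
  · obtain ⟨x, hxX, hcx⟩ := hex
    obtain ⟨w, hwX, q, hq, hqn, hqT, hqX, q1, q2, q3, q4⟩ : ∃ w ∈ X, ∃ q, PW G b q w ∧ q.Nodup ∧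
        (∀ z ∈ q, z ∉ T) ∧ (∀ z ∈ q, z ∉ X) ∧ a1 ∉ q ∧ b1 ∉ q ∧ a2 ∉ q ∧ c2 ∉ q := by
      rcases first_hit (X := {z | z ∈ X}) hcx hxX with h0 | ⟨h0, w, hw, hwU, p, hp, hpn, hpU⟩
      · exact ⟨n, h0, [], PW.nil_iff.2 hbn, by simp⟩
      · have hnX : n ∉ X := h0
        have hk : ∀ k ∈ X, ∀ y ∈ n :: p, y ≠ k ∧ y ∉ T := by
          intro k hk y hy
          rcases List.mem_cons.1 hy with rfl | hy
          · exact ⟨fun e => hnX (e ▸ hk), hn⟩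
          · exact ⟨fun e => (hpU y hy).2 (e ▸ hk), (hpU y hy).1⟩
        have z1 := ha1.avoid hp (hk m hmX)
        have z2 := hb1.avoid hp (hk m hmX)
        have z3 := ha2.avoid hp (hk m' hmX')
        have z4 := hc2.avoid hp (hk m' hmX')
        refine ⟨w, hw, n :: p, PW.cons_iff.2 ⟨hbn, hp⟩, ?_, fun z hz => (hk m hmX z hz).2,
          fun z hz hzX => (hk z hzX z hz).1 rfl, ?_, ?_, ?_, ?_⟩
        · simp only [List.nodup_cons, List.nodup_append, List.mem_append, List.mem_cons] at *
          grind
        · rw [List.mem_cons]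
          rintro (rfl | e)
          · exact hab (h.F1 hn ha1.mem hb1.mem ha1.atri hbn.symm)
          · exact z1 e
        · rw [List.mem_cons]
          rintro (rfl | e)
          · exact hnb1 rfl
          · exact z2 e
        · rw [List.mem_cons]
          rintro (rfl | e)
          · exact hab (h.F1 hn ha2.mem hb1.mem ha2.atri hbn.symm)
          · exact z3 e
        · rw [List.mem_cons]
          rintro (rfl | e)
          · exact hbc (h.F1 hn hb1.mem hc2.mem hbn.symm hc2.atri)
          · exact z4 e
    obtain ⟨s1, s2, rfl⟩ := List.append_of_mem hwX
    have lng : ∀ {x y s t : V}, Leaf G T x m s → Leaf G T y m' t →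
        PW G s (x :: s1) w ∧ PW G w (s2 ++ [y]) t := by
      intro x y s t hx hy
      have := long hx hy
      have e : x :: (s1 ++ w :: s2 ++ [y]) = (x :: s1) ++ w :: (s2 ++ [y]) := by simp
      rw [e] at this
      exact PW.split.1 this
    have u1 : PW G a ((a1 :: s1) ++ w :: q.reverse) b := (lng ha1 hc2).1.glue hq.rev
    have u2 : PW G b ((b1 :: s1) ++ w :: q.reverse) b := (lng hb1 hc2).1.glue hq.rev
    have u3 : PW G b (q ++ w :: (s2 ++ [c2])) c := hq.glue (lng ha1 hc2).2
    have u4 : PW G b (q ++ w :: (s2 ++ [a2])) a := hq.glue (lng ha1 ha2).2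
    have g1 := PC_diff h.nc h.tri ha1.mem hb1.mem hab u1 (by
      simp only [List.nodup_cons, List.nodup_append, List.mem_append, List.mem_cons,
        List.cons_append, List.mem_reverse, List.nodup_reverse] at *
      grind) (by
      simp only [List.mem_append, List.mem_cons, List.mem_reverse] at *
      grind) (by simp)
    have g2 := PC_same h.nc hb1.mem u2 (by
      simp only [List.nodup_cons, List.nodup_append, List.mem_append, List.mem_cons,
        List.cons_append, List.mem_reverse, List.nodup_reverse] at *
      grind) (by
      simp only [List.mem_append, List.mem_cons, List.mem_reverse] at *
      grind) (by simp; omega)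
    have g3 := PC_diff h.nc h.tri hb1.mem hc2.mem hbc u3 (by
      simp only [List.nodup_cons, List.nodup_append, List.mem_append, List.mem_cons] at *
      grind) (by
      simp only [List.mem_append, List.mem_cons] at *
      grind) (by simp)
    simp only [List.length_append, List.length_cons, List.length_nil, List.length_reverse]
      at g1 g2 g3 hXl
    rcases s1 with - | ⟨m0, s1⟩
    · simp only [List.length_nil] at *
      omega
    · obtain ⟨r, hr⟩ := hX0
      have : m0 = m := by simp at hr; exact hr.1
      subst this
      have g4 := PC_two h.nc (p := [b1, m0, a1]) hb1.mem ha1.mem hab.symm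
        (by simp [PW.cons_iff, PW.nil_iff, ha1.atri, hb1.atri.symm, hb1.am, ha1.am.symm])
        (by simp [hb1.am.ne, eab.symm, ha1.am.ne'])
        (by simp [hb1.nu, ha1.nu, ha1.nm]) u4 (by
        simp only [List.nodup_cons, List.nodup_append, List.mem_append, List.mem_cons] at *
        grind) (by
        simp only [List.mem_append, List.mem_cons] at *
        grind) (by
        simp only [List.nodup_cons, List.nodup_append, List.mem_append, List.mem_cons,
          List.cons_append] at *
        grind) (by simp)
      simp only [List.length_append, List.length_cons, List.length_nil] at g4 g1 g2 g3 hXl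
      omega
  · have hm : ¬ Cn G Tᶜ n m := fun hc => hex ⟨m, hmX, hc⟩
    have hm' : ¬ Cn G Tᶜ n m' := fun hc => hex ⟨m', hmX', hc⟩
    obtain ⟨t1, ht1, t2, ht2, hne, hz⟩ := h.zero hn hb1.mem hbn.symm
    have hbcz : ¬ ZP G T n b c := by
      rintro ⟨p, hp, hpn, hD, hl⟩
      have k1 : ¬ Cn G Tᶜ n a1 := fun hc => hm (hc.trans (Cn.single ha1.am ha1.nu ha1.nm))
      have k2 : ¬ Cn G Tᶜ n b1 := fun hc => hm (hc.trans (Cn.single hb1.am hb1.nu hb1.nm))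
      have k3 : ¬ Cn G Tᶜ n a2 := fun hc => hm' (hc.trans (Cn.single ha2.am ha2.nu ha2.nm))
      have k4 : ¬ Cn G Tᶜ n c2 := fun hc => hm' (hc.trans (Cn.single hc2.am hc2.nu hc2.nm))
      have := PC_three h.nc (p := p) (q := [c2, m', a2]) (r := [a1, m, b1]) hb1.mem hc2.mem ha1.mem
        hbc hac.symm hab.symm hp hpn (fun z hz => (hD z hz).mem hn)
        (by simp [PW.cons_iff, PW.nil_iff, ha2.atri, hc2.atri.symm, hc2.am, ha2.am.symm])
        (by simp [hc2.am.ne, eac2.symm, ha2.am.ne'])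
        (by simp [hc2.nu, ha2.nu, ha2.nm])
        (by simp [PW.cons_iff, PW.nil_iff, hb1.atri, ha1.atri.symm, ha1.am, hb1.am.symm])
        (by simp [ha1.am.ne, eab, hb1.am.ne'])
        (by simp [ha1.nu, hb1.nu, hb1.nm])
        (by
          intro z hz
          have := hD z hz
          simp
          refine ⟨?_, ?_, ?_⟩ <;> rintro rfl <;> contradiction)
        (by
          intro z hz
          have := hD z hz
          simp
          refine ⟨?_, ?_, ?_⟩ <;> rintro rfl <;> contradiction)
        (by
          have y1 : a1 ≠ m' := fun e => na1 (e ▸ hmX')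
          have y2 : b1 ≠ m' := fun e => nb1 (e ▸ hmX')
          have y3 : a2 ≠ m := fun e => na2 (e ▸ hmX)
          have y4 : c2 ≠ m := fun e => nc2 (e ▸ hmX)
          simp
          grind)
      simp only [List.length_cons, List.length_nil] at this
      omega
    have hall := h.tri.all ha1.mem hb1.mem hc2.mem hab hbc hac
    rcases hall t1 ht1 with rfl | rfl | rfl <;> rcases hall t2 ht2 with rfl | rfl | rfl
    · exact hne rfl
    · exact h.star_zp ha1 hb1 hne hn hz hm
    · exact h.star_zp ha2 hc2 hne hn hz hm'
    · exact h.star_zp hb1 ha1 hne hn hz hm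
    · exact hne rfl
    · exact hbcz hz
    · exact h.star_zp hc2 ha2 hne hn hz hm'
    · exact hbcz hz.symm
    · exact hne rfl

theorem Core.pair (h : Core G T) {t t' u v u' v' m m' : V}
    (hu : Leaf G T u m t) (hv : Leaf G T v m t') (hu' : Leaf G T u' m' t)
    (hv' : Leaf G T v' m' t') (hne : t ≠ t') (hmm : m ≠ m')
    (hd : ∀ z ∈ [u, m, v], z ∉ [u', m', v']) : False := by
  have e1 : u ≠ v := by
    rintro rfl; exact hne (h.F1 hu.nu hu.mem hv.mem hu.atri hv.atri)
  have e2 : u' ≠ v' := by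
    rintro rfl; exact hne (h.F1 hu'.nu hu'.mem hv'.mem hu'.atri hv'.atri)
  have := PC_two h.nc (p := [u, m, v]) (q := [u', m', v']) hu.mem hv.mem hne
    (by simp [PW.cons_iff, PW.nil_iff, hu.atri.symm, hv.atri, hu.am, hv.am.symm])
    (by simp [hu.am.ne, e1, hv.am.ne']) (by simp [hu.nu, hu.nm, hv.nu])
    (by simp [PW.cons_iff, PW.nil_iff, hu'.atri.symm, hv'.atri, hu'.am, hv'.am.symm])
    (by simp [hu'.am.ne, e2, hv'.am.ne']) (by simp [hu'.nu, hu'.nm, hv'.nu]) hd (by simp)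
  simp at this

theorem Core.false [Finite V] (h : Core G T) : False := by
  obtain ⟨b, hb⟩ : ∃ b, b ∈ T := by
    obtain ⟨a, b, c, -, -, -, rfl⟩ := h.tri
    exact ⟨a, by simp⟩
  obtain ⟨n, hbn, hn⟩ := h.out b hb
  obtain ⟨m, hm, hnm⟩ := h.wnbr hn hb hbn.symm
  obtain ⟨l, hl, h2⟩ := MaxL.exists (T := T) hn hm hnm
  clear hm hnm
  rcases l with - | ⟨u, - | ⟨m, r⟩⟩
  · simp at h2
  · simp at h2
  rcases List.eq_nil_or_concat r with rfl | ⟨r, u', rfl⟩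
  · exact h.L2 hl
  rw [List.concat_eq_append] at *
  rcases List.eq_nil_or_concat r with rfl | ⟨mid, m', rfl⟩
  · exact h.star hl
  rw [List.concat_eq_append] at *
  have hl' : MaxL G T (u' :: m' :: (mid.reverse ++ [m, u])) := by simpa using hl.rev
  obtain ⟨t, hu⟩ := h.L1 hl
  obtain ⟨v, t', hvl, hv, htt, -⟩ := h.L3 hl (by simp) hu
  obtain ⟨s, hu'⟩ := h.L1 hl'
  obtain ⟨v', s', hvl', hv', hss, -⟩ := h.L3 hl' (by simp) hu'
  have hnd := hl.nd
  have hmm : m ≠ m' := by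
    simp at hnd; tauto
  have hvv : v ≠ v' := by
    rintro rfl
    rcases hv.all _ hv'.am with h0 | h0
    · exact hmm h0.symm
    · exact hv'.nm (h0 ▸ hv.mem)
  have hch : PW G m mid m' := by
    have := hl.ch
    refine chain_pw (B := [u']) ?_
    simp at this ⊢
    exact this.2
  have hX : (m :: (mid ++ [m'])).Nodup := by
    simp only [List.nodup_cons, List.nodup_append, List.mem_append, List.mem_cons] at *
    grind
  have hout : ∀ z ∈ mid, z ∉ T := fun z hz => hl.out z (by simp [hz])
  have x1 : u ∉ m :: (mid ++ [m']) := by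
    simp only [List.nodup_cons, List.nodup_append, List.mem_append, List.mem_cons] at *
    grind
  have x2 : v ∉ m :: (mid ++ [m']) := by
    simp only [List.mem_append, List.mem_cons] at *
    grind
  have x3 : u' ∉ m :: (mid ++ [m']) := by
    simp only [List.nodup_cons, List.nodup_append, List.mem_append, List.mem_cons] at *
    grind
  have x4 : v' ∉ m :: (mid ++ [m']) := by
    simp only [List.mem_append, List.mem_cons, List.mem_reverse] at *
    grind
  have y0 : u ≠ u' := by
    simp at hnd; tauto
  have y1 : v ≠ u' := by
    simp at hvl; tauto
  have y2 : v' ≠ u := by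
    simp at hvl'; tauto
  have key : ∀ {a b s c a1 b1 a2 c2 : V}, Leaf G T a1 m a → Leaf G T b1 m b → Leaf G T a2 m' a →
      Leaf G T c2 m' c → a ≠ b → a ≠ c → (b = c → ∀ z ∈ [a1, m, b1], z ∉ [a2, m', c2]) →
      a1 ∉ m :: (mid ++ [m']) → b1 ∉ m :: (mid ++ [m']) → a2 ∉ m :: (mid ++ [m']) →
      c2 ∉ m :: (mid ++ [m']) → False := by
    intro a b s c a1 b1 a2 c2 g1 g2 g3 g4 hab hac hd k1 k2 k3 k4
    by_cases hbc : b = c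
    · subst hbc
      exact h.pair g1 g2 g3 g4 hab hmm (hd rfl)
    · exact h.dbl hch hX hout g1 g2 g3 g4 hab hbc hac k1 k2 k3 k4
  have hd : ∀ z ∈ [u, m, v], z ∉ [u', m', v'] := by
    simp at x1 x2 x3 x4 ⊢
    grind
  obtain ⟨r, hr, hrt, hrt', hall⟩ := h.tri.third hu.mem hv.mem htt.symm
  have c1 := hall s hu'.mem
  have c2 := hall s' hv'.mem
  by_cases e1 : t = s
  · subst e1
    exact key (s := t) hu hv hu' hv' htt.symm hss.symm (fun _ => hd) x1 x2 x3 x4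
  by_cases e2 : t = s'
  · subst e2
    exact key (s := t) hu hv hv' hu' htt.symm hss (fun _ => by simp at hd ⊢; grind) x1 x2 x4 x3
  by_cases e3 : t' = s
  · subst e3
    exact key (s := t) hv hu hu' hv' htt hss.symm (fun _ => by simp at hd ⊢; grind) x2 x1 x3 x4
  by_cases e4 : t' = s'
  · subst e4
    exact key (s := t) hv hu hv' hu' htt hss (fun _ => by simp at hd ⊢; grind) x2 x1 x4 x3
  grind

end forest3


section final
variable {V : Type*} {G : SimpleGraph V}

theorem deleteVerts_adj {S : Set V} {a b : V} :
    (deleteVerts G S).Adj a b ↔ G.Adj a b ∧ a ∉ S ∧ b ∉ S := by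
  simp only [deleteVerts, SimpleGraph.fromRel_adj]
  constructor
  · rintro ⟨-, h | h⟩
    · exact h
    · exact ⟨h.1.symm, h.2.2, h.2.1⟩
  · intro h
    exact ⟨h.1.ne, Or.inl h⟩

theorem Ess_of (h : EssentiallyThreeConnected G) : Ess G := by
  intro S hS a a' b b' haa hbb h1 h2 h3 h4
  have := h.2 S hS a a' b b' haa.ne hbb.ne
    (SimpleGraph.Adj.reachable (deleteVerts_adj.2 ⟨haa, h1, h2⟩))
    (SimpleGraph.Adj.reachable (deleteVerts_adj.2 ⟨hbb, h3, h4⟩))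
  rw [SimpleGraph.reachable_iff_reflTransGen] at this
  exact Relation.ReflTransGen.mono (fun p q hpq => deleteVerts_adj.1 hpq) _ _ this

theorem bow_len (hN : NC G) {v x x' y y' : V} {p : List V} (hvx : G.Adj v x) (hvx' : G.Adj v x')
    (hxx : G.Adj x x') (hvy : G.Adj v y) (hvy' : G.Adj v y') (hyy : G.Adj y y')
    (hp : PW G x p y) (hnd : (x :: (p ++ [y])).Nodup) (hv : v ∉ x :: (p ++ [y]))
    (hx' : x' ∉ x :: (p ++ [y])) (hy' : y' ∉ x :: (p ++ [y])) (hne : x' ≠ y') :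
    p.length % 4 = 2 := by
  have w1 : PW G v (x :: (p ++ [y])) v :=
    PW.cons_iff.2 ⟨hvx, hp.glue (PW.nil_iff.2 hvy.symm)⟩
  have w2 : PW G v (x' :: x :: (p ++ [y])) v :=
    PW.cons_iff.2 ⟨hvx', PW.cons_iff.2 ⟨hxx.symm, hp.glue (PW.nil_iff.2 hvy.symm)⟩⟩
  have w3 : PW G v (x' :: x :: (p ++ [y, y'])) v :=
    PW.cons_iff.2 ⟨hvx', PW.cons_iff.2 ⟨hxx.symm, hp.glue (PW.cons_iff.2
      ⟨hyy, PW.nil_iff.2 hvy'.symm⟩)⟩⟩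
  have e1 := hvx'.ne
  have e2 := hvy'.ne
  have g1 := hN _ _ w1 (List.nodup_cons.2 ⟨hv, hnd⟩) (by simp)
  have g2 := hN _ _ w2 (by
    simp only [List.nodup_cons, List.nodup_append, List.mem_append, List.mem_cons] at *
    grind) (by simp)
  have g3 := hN _ _ w3 (by
    simp only [List.nodup_cons, List.nodup_append, List.mem_append, List.mem_cons] at *
    grind) (by simp)
  simp only [List.length_append, List.length_cons, List.length_nil] at g1 g2 g3
  omega

theorem bow_end (hN : NC G) {x x' y y' : V} {p q : List V}
    (hxx : G.Adj x x') (hyy : G.Adj y y')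
    (hp : PW G x p y) (hq : PW G x' q y') (hnd : (x :: (p ++ [y])).Nodup)
    (hnd' : (x' :: (q ++ [y'])).Nodup) (hd : ∀ z ∈ x :: (p ++ [y]), z ∉ x' :: (q ++ [y']))
    (h1 : p.length % 4 = 2) (h2 : q.length % 4 = 2) : False := by
  have w : PW G x (p ++ y :: y' :: (q.reverse ++ [x'])) x :=
    hp.glue (PW.cons_iff.2 ⟨hyy, hq.rev.glue (PW.nil_iff.2 hxx.symm)⟩)
  have := hN _ _ w (by
    simp only [List.nodup_cons, List.nodup_append, List.mem_append, List.mem_cons,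
      List.mem_reverse, List.nodup_reverse] at *
    grind) (by simp; omega)
  simp only [List.length_append, List.length_cons, List.length_nil, List.length_reverse] at this
  omega

theorem cn_path {H : SimpleGraph V} {U : Set V} {x y : V} (hc : Cn H U x y) (hx : x ∈ U)
    (hne : x ≠ y) : ∃ p, PW H x p y ∧ (x :: (p ++ [y])).Nodup ∧ ∀ z ∈ x :: (p ++ [y]), z ∈ U := by
  rcases first_hit (X := {y}) hc rfl with h0 | ⟨h0, w, hw, hwU, p, hp, hnd, hpU⟩
  · exact absurd h0 hne
  · cases hw
    refine ⟨p, hp, hnd, ?_⟩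
    intro z hz
    simp only [List.mem_cons, List.mem_append, List.not_mem_nil, or_false] at hz
    rcases hz with rfl | hz | rfl
    · exact hx
    · exact (hpU z hz).1
    · exact hwU

theorem PW.mono {H : SimpleGraph V} (hG : H ≤ G) {x y : V} {p : List V} (h : PW H x p y) :
    PW G x p y := List.IsChain.imp (fun _ _ hab => hG hab) h

theorem PW.not_del {v x y : V} {p : List V} (h : PW (deleteVerts G {v}) x p y) :
    v ∉ x :: (p ++ [y]) := by
  induction p generalizing x with
  | nil =>
    rw [PW.nil_iff, deleteVerts_adj] at h
    have h1 := h.2.1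
    have h2 := h.2.2
    simp at h1 h2 ⊢
    exact ⟨fun e => h1 e.symm, fun e => h2 e.symm⟩
  | cons a p ih =>
    rw [PW.cons_iff, deleteVerts_adj] at h
    have h1 := h.1.2.1
    rw [List.cons_append, List.mem_cons]
    rintro (rfl | h2)
    · exact h1 rfl
    · exact ih h.2 h2

theorem bowtie [Finite V] (hN : NC G) (hE : Ess G) {v a b c d : V} (hva : G.Adj v a)
    (hvb : G.Adj v b) (hab : G.Adj a b) (hvc : G.Adj v c) (hvd : G.Adj v d) (hcd : G.Adj c d)
    (hac : a ≠ c) (had : a ≠ d) (hbc : b ≠ c) (hbd : b ≠ d)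
    (h1 : ∀ t ∈ ({v, a, b} : Set V), ∃ n, G.Adj t n ∧ n ∉ ({v, a, b} : Set V))
    (h2 : ∀ t ∈ ({v, c, d} : Set V), ∃ n, G.Adj t n ∧ n ∉ ({v, c, d} : Set V)) : False := by
  classical
  have hle : deleteVerts G {v} ≤ G := fun _ _ hh => (deleteVerts_adj.1 hh).1
  have hlk : Lk (deleteVerts G {v}) {a, b} {c, d} 2 := by
    apply menger
    intro S hS
    by_contra hlt
    have hc2 : ((insert v (S : Set V)) : Set V).ncard ≤ 2 := by
      have := Set.ncard_insert_le v (S : Set V)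
      rw [Set.ncard_coe_finset] at this
      omega
    obtain ⟨t, n, htn, ht, htS, hnS⟩ := tri_robust (T := {v, a, b})
      ⟨v, a, b, hva, hab, hvb, rfl⟩ h1 _ hc2
    obtain ⟨t', n', htn', ht', htS', hnS'⟩ := tri_robust (T := {v, c, d})
      ⟨v, c, d, hvc, hcd, hvd, rfl⟩ h2 _ hc2
    have hcn := hE _ hc2 t n t' n' htn htn' htS hnS htS' hnS'
    simp only [Set.mem_insert_iff, not_or] at htS htS'
    refine hS t ?_ t' ?_ htS.2 htS'.2 ?_
    · rcases ht with h | h | h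
      · exact absurd h htS.1
      · simp [h]
      · simp at h; simp [h]
    · rcases ht' with h | h | h
      · exact absurd h htS'.1
      · simp [h]
      · simp at h; simp [h]
    · refine Relation.ReflTransGen.mono ?_ _ _ hcn
      rintro p q ⟨g1, g2, g3⟩
      simp only [Set.mem_compl_iff, Set.mem_insert_iff, not_or] at g2 g3
      exact ⟨deleteVerts_adj.2 ⟨g1, by simpa using g2.1, by simpa using g3.1⟩, g2.2, g3.2⟩
  obtain ⟨f, hf, hh⟩ := hlk
  obtain ⟨x, hx, y, hy, hxf, hxy⟩ := hh 0
  obtain ⟨x', hx', y', hy', hxf', hxy'⟩ := hh 1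
  have hdis := Set.disjoint_left.1 (hf 0 1 (by simp))
  have hyf := hxy.mem hxf
  have hyf' := hxy'.mem hxf'
  have exx : x ≠ x' := fun e => hdis hxf (e ▸ hxf')
  have eyy : y ≠ y' := fun e => hdis hyf (e ▸ hyf')
  have ne : ∀ x ∈ ({a, b} : Set V), ∀ y ∈ ({c, d} : Set V), x ≠ y := by
    rintro x (rfl | rfl) y (rfl | rfl) <;> assumption
  obtain ⟨p, hp, hpn, hpU⟩ := cn_path hxy hxf (ne x hx y hy)
  obtain ⟨q, hq, hqn, hqU⟩ := cn_path hxy' hxf' (ne x' hx' y' hy')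
  have avx : ∀ x ∈ ({a, b} : Set V), G.Adj v x := by
    rintro x (rfl | rfl) <;> assumption
  have avy : ∀ x ∈ ({c, d} : Set V), G.Adj v x := by
    rintro x (rfl | rfl) <;> assumption
  have axx : G.Adj x x' := by
    rcases hx with rfl | rfl <;> rcases hx' with rfl | rfl
    · exact absurd rfl exx
    · exact hab
    · exact hab.symm
    · exact absurd rfl exx
  have ayy : G.Adj y y' := by
    rcases hy with rfl | rfl <;> rcases hy' with rfl | rfl
    · exact absurd rfl eyy
    · exact hcd
    · exact hcd.symm
    · exact absurd rfl eyy
  have l1 := bow_len hN (avx x hx) (avx x' hx') axx (avy y hy) (avy y' hy') ayy (hp.mono hle) hpn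
    hp.not_del (fun h => hdis (hpU _ h) hxf') (fun h => hdis (hpU _ h) hyf') (ne x' hx' y' hy')
  have l2 := bow_len hN (avx x' hx') (avx x hx) axx.symm (avy y' hy') (avy y hy) ayy.symm
    (hq.mono hle) hqn
    hq.not_del (fun h => hdis hxf (hqU _ h)) (fun h => hdis hyf (hqU _ h)) (ne x hx y hy)
  exact bow_end hN axx ayy (hp.mono hle) (hq.mono hle) hpn hqn
    (fun z hz hz' => hdis (hpU z hz) (hqU z hz')) l1 l2

theorem two_faces [Finite V] (hN : NC G) (hE : Ess G) {T C : Set V} (hT : Tri G T) (hC : Tri G C)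
    (hne : T ≠ C) (hTn : ∀ t ∈ T, ∃ n, G.Adj t n ∧ n ∉ T)
    (hCn : ∀ t ∈ C, ∃ n, G.Adj t n ∧ n ∉ C) : False := by
  by_cases hv : ∃ v ∈ T, v ∈ C
  swap
  · push Not at hv
    exact two_tri hN hE hT hC (fun z hz hzT => hv z hzT hz) hTn hCn
  obtain ⟨v, hvT, hvC⟩ := hv
  by_cases hw : ∃ w ∈ T, w ∈ C ∧ w ≠ v
  · obtain ⟨w, hwT, hwC, hwv⟩ := hw
    obtain ⟨a, haT, hav, haw, hTa⟩ := hT.third hvT hwT hwv.symm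
    obtain ⟨c, hcC, hcv, hcw, hCc⟩ := hC.third hvC hwC hwv.symm
    have hac : a ≠ c := by
      rintro rfl
      apply hne
      ext z
      constructor
      · intro hz
        rcases hTa z hz with rfl | rfl | rfl <;> assumption
      · intro hz
        rcases hCc z hz with rfl | rfl | rfl <;> assumption
    have := hN v [a, w, c] (by
      simp [PW.cons_iff, PW.nil_iff, hT.adj hvT haT hav.symm, hT.adj haT hwT haw,
        hC.adj hwC hcC hcw.symm, hC.adj hcC hvC hcv])
      (by simp; grind) (by simp)
    simp at this
  · push Not at hw
    obtain ⟨a, haT, hav⟩ := hT.other hvT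
    obtain ⟨b, hbT, hbv, hba, hTb⟩ := hT.third hvT haT hav.symm
    obtain ⟨c, hcC, hcv⟩ := hC.other hvC
    obtain ⟨d, hdC, hdv, hdc, hCd⟩ := hC.third hvC hcC hcv.symm
    have eT : T = {v, a, b} := by
      ext z
      constructor
      · intro hz
        have := hTb z hz
        simpa using this
      · rintro (rfl | rfl | rfl) <;> assumption
    have eC : C = {v, c, d} := by
      ext z
      constructor
      · intro hz
        have := hCd z hz
        simpa using this
      · rintro (rfl | rfl | rfl) <;> assumption
    have hd : ∀ z ∈ T, z ≠ v → ∀ y ∈ C, z ≠ y := by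
      rintro z hz hzv y hy rfl
      exact hzv (hw z hz hy)
    exact bowtie hN hE (hT.adj hvT haT hav.symm) (hT.adj hvT hbT hbv.symm)
      (hT.adj haT hbT hba.symm) (hC.adj hvC hcC hcv.symm) (hC.adj hvC hdC hdv.symm)
      (hC.adj hcC hdC hdc.symm) (hd a haT hav c hcC) (hd a haT hav d hdC) (hd b hbT hbv c hcC)
      (hd b hbT hbv d hdC) (eT ▸ hTn) (eC ▸ hCn)

theorem countP_lt_of {α : Type*} {l : List α} {p r : α → Bool} (h : ∀ x ∈ l, p x → r x) {g : α}
    (hg : g ∈ l) (hr : r g) (hp : ¬ p g) : l.countP p < l.countP r := by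
  induction l with
  | nil => simp at hg
  | cons x l ih =>
    rw [List.countP_cons, List.countP_cons]
    rcases List.mem_cons.1 hg with rfl | hg
    · have := List.countP_mono_left (p := p) (q := r) (l := l)
        fun y hy => h y (List.mem_cons_of_mem _ hy)
      simp only [hr, hp]
      simp
      omega
    · have := ih (fun y hy => h y (List.mem_cons_of_mem _ hy)) hg
      have := h x (by simp)
      split_ifs <;> first | omega | simp_all

theorem cycle_other {u v w : V} {c : G.Walk u u} (hc : c.IsCycle) (h : s(v, w) ∈ c.edges) :
    ∃ w', w' ≠ w ∧ s(v, w') ∈ c.edges := by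
  have hv : v ∈ c.support := c.fst_mem_support_of_mem_edges h
  have h2 := hc.ncard_neighborSet_toSubgraph_eq_two hv
  have h3 : 1 < (c.toSubgraph.neighborSet v).ncard := by omega
  obtain ⟨w', hw', hne⟩ := Set.exists_ne_of_one_lt_ncard h3 w
  refine ⟨w', hne, ?_⟩
  rw [SimpleGraph.Subgraph.mem_neighborSet] at hw'
  have : s(v, w') ∈ c.toSubgraph.edgeSet := hw'
  simpa [SimpleGraph.Walk.mem_edges_toSubgraph] using this

theorem cycle_three {u : V} {c : G.Walk u u} (hl : c.length = 3) :
    Tri G {z | z ∈ c.support} ∧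
      ∀ x ∈ c.support, ∀ y ∈ c.support, x ≠ y → s(x, y) ∈ c.edges := by
  match c, hl with
  | .cons h1 (.cons h2 (.cons h3 .nil)), hd =>
    clear hd
    rename_i b d
    refine ⟨⟨u, b, d, h1, h2, h3.symm, ?_⟩, ?_⟩
    · ext z
      simp
      tauto
    · intro x hx y hy hxy
      simp at hx hy ⊢
      grind

theorem main_aux [Fintype V] [DecidableEq V]
    [DecidableRel G.Adj] (F : PlaneFaces G)
    (hno : ¬ ∃ (u : V) (c : G.Walk u u), c.IsCycle ∧ 4 ∣ c.length)
    (h2face : ∀ f ∈ F.faces, f.2.length = 3 →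
      ∀ v ∈ f.2.support, G.degree v ≠ 2)
    (hess : EssentiallyThreeConnected G) :
    (F.faces.countP fun f => decide (f.2.length = 3)) ≤ 1 := by
  have hN := NC_of hno
  have hE := Ess_of hess
  by_contra hcon
  push Not at hcon
  have hout : ∀ f ∈ F.faces, f.2.length = 3 →
      ∀ t ∈ {z | z ∈ f.2.support}, ∃ n, G.Adj t n ∧ n ∉ {z | z ∈ f.2.support} := by
    intro f hf hf3 t ht
    by_contra hno'
    push Not at hno'
    have hT := (cycle_three hf3).1
    apply h2face f hf hf3 t ht
    obtain ⟨s, hs, hst⟩ := hT.other ht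
    obtain ⟨r, hr, hrt, hrs, hall⟩ := hT.third ht hs hst.symm
    rw [← SimpleGraph.card_neighborFinset_eq_degree, Finset.card_eq_two]
    refine ⟨s, r, hrs.symm, ?_⟩
    ext z
    rw [SimpleGraph.mem_neighborFinset, Finset.mem_insert, Finset.mem_singleton]
    constructor
    · intro hz
      rcases hall z (hno' z hz) with h0 | h0 | h0
      · exact absurd h0 hz.ne'
      · exact Or.inl h0
      · exact Or.inr h0
    · rintro (rfl | rfl)
      · exact hT.adj ht hs hst.symm
      · exact hT.adj ht hr hrt.symm
  have hface : ∀ v w, G.Adj v w → ∃ f ∈ F.faces, s(v, w) ∈ f.2.edges := by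
    intro v w hvw
    have := F.edgeTwice s(v, w) hvw
    have : 0 < F.faces.countP fun f => decide (s(v, w) ∈ f.2.edges) := by omega
    rw [List.countP_pos_iff] at this
    simpa using this
  have hdeg : ∀ v w, G.Adj v w → ∃ w', w' ≠ w ∧ G.Adj v w' := by
    intro v w hvw
    obtain ⟨f, hf, he⟩ := hface v w hvw
    obtain ⟨w', hw', he'⟩ := cycle_other (F.isCycle f hf) he
    exact ⟨w', hw', f.2.adj_of_mem_edges he'⟩
  obtain ⟨f, hf, hf3⟩ : ∃ f ∈ F.faces, f.2.length = 3 := by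
    have : 0 < F.faces.countP fun f => decide (f.2.length = 3) := by omega
    rw [List.countP_pos_iff] at this
    simpa using this
  by_cases hA : ∃ g ∈ F.faces, g.2.length = 3 ∧ {z | z ∈ f.2.support} ≠ {z | z ∈ g.2.support}
  · obtain ⟨g, hg, hg3, hne⟩ := hA
    exact two_faces hN hE (cycle_three hf3).1 (cycle_three hg3).1 hne (hout f hf hf3)
      (hout g hg hg3)
  push Not at hA
  have hsupp : ∀ g ∈ F.faces, g.2.length = 3 → ∀ z, z ∈ f.2.support ↔ z ∈ g.2.support :=
    fun g hg hg3 z => Set.ext_iff.1 (hA g hg hg3) z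
  have hTe : ∀ x ∈ f.2.support, ∀ y ∈ f.2.support, x ≠ y → ∀ g ∈ F.faces, s(x, y) ∈ g.2.edges →
      g.2.length = 3 := by
    intro x hx y hy hxy g hg hge
    by_contra hg3
    have h2 := F.edgeTwice s(x, y) ((cycle_three hf3).1.adj hx hy hxy)
    have := countP_lt_of (l := F.faces) (p := fun f => decide (f.2.length = 3))
      (r := fun f => decide (s(x, y) ∈ f.2.edges)) (by
        intro k hk hk3
        simp only [decide_eq_true_eq] at hk3 ⊢
        exact (cycle_three hk3).2 x ((hsupp k hk hk3 x).1 hx) y ((hsupp k hk hk3 y).1 hy) hxy)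
      hg (by simpa using hge) (by simpa using hg3)
    omega
  have hcore : Core G {z | z ∈ f.2.support} := by
    refine ⟨hN, hE, (cycle_three hf3).1, ?_, hdeg⟩
    intro t ht
    obtain ⟨n, htn, hn⟩ := hout f hf hf3 t ht
    obtain ⟨g, hg, he⟩ := hface t n htn
    obtain ⟨n', hne, he'⟩ := cycle_other (F.isCycle g hg) he
    have htn' := g.2.adj_of_mem_edges he'
    refine ⟨n, n', hne.symm, htn, htn', hn, fun hn' => ?_⟩
    have hg3 := hTe t ht n' hn' htn'.ne g hg he'
    exact hn ((hsupp g hg hg3 n).2 (g.2.snd_mem_support_of_mem_edges he))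
  exact hcore.false

end final

/-- Let `G` be a plane graph with no cycle of length divisible by 4, in which no
degree-2 vertex lies on a 3-face, and which is essentially 3-connected.  Then `G` has
at most one 3-face. -/
theorem stmt_15 {V : Type*} [Fintype V] [DecidableEq V] (G : SimpleGraph V)
    [DecidableRel G.Adj] (F : PlaneFaces G)
    (hno : ¬ ∃ (u : V) (c : G.Walk u u), c.IsCycle ∧ 4 ∣ c.length)
    (h2face : ∀ f ∈ F.faces, f.2.length = 3 →
      ∀ v ∈ f.2.support, G.degree v ≠ 2)
    (hess : EssentiallyThreeConnected G) :
    (F.faces.countP fun f => decide (f.2.length = 3)) ≤ 1 := by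
  exact main_aux F hno h2face hess
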